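/- Let $M$ be a connected, oriented, complete, non-compact smooth Riemannian manifold of dimension $m$ and let $\psi : M \to \mathbb{R}^{m+1}$ be a smooth isometric immersion with spherical Gauss map (smooth unit normal field) $\nu : M \to \mathbb{S}^m \subseteq \mathbb{R}^{m+1}$. Denote by $A(X,Y) = -\langle d\nu(X), d\psi(Y)\rangle$ the second fundamental form in the direction of $\nu$, by $|A|$ its (Hilbert–Schmidt) norm, by $\mathbf{H} = \frac{1}{m}\,\mathrm{tr}(A)\,\nu$ the mean curvature vector, and by $\psi^\perp$ the component of the position vector $\psi$ normal to the immersion. Let $c \in \mathbb{R}$ and suppose that $\psi$ is a mean curvature flow soliton with respect to the position vector field with soliton constant $c$, that is, $m\mathbf{H} = c\,\psi^\perp$ on $M$. Fix $o \in M$, let $B_R$ be the geodesic ball of radius $R$ of $M$ centered at $o$, and assume that $$\liminf_{R\to+\infty} \frac{1}{R} \log \int_{B_R} e^{\frac{c}{2}|\psi|^2} = 0,$$ where the integral is taken with respect to the Riemannian volume of $M$. Assume moreover that $|A|$ is bounded on $M$ and that $$\langle b, \nu\rangle \geq \frac{1}{1+|A|^2} \quad \text{on } M$$ for some fixed vector $b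 \in \mathbb{S}^m$. Then $\psi(M)$ is a hyperplane of $\mathbb{R}^{m+1}$ orthogonal to $b$, and if $c \neq 0$ then $0 \in \psi(M)$. -/

import Mathlib

open Set Filter MeasureTheory Metric Manifold Bundle
open scoped RealInnerProductSpace ContDiff ENNReal

noncomputable section

namespace MCFSoliton

/-! ## Riemannian volume and weighted volume growth -/

section Volume

variable {m : ℕ} {M : Type*} [MetricSpace M] [ChartedSpace (EuclideanSpace ℝ (Fin m)) M]
  [RiemannianBundle (fun x : M => TangentSpace (𝓡 m) x)]

/-- The coordinate vector field `∂/∂yⁱ` of the preferred chart at `p`, at the point of `M` with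
coordinates `y`. -/
def coordVector (p : M) (y : EuclideanSpace ℝ (Fin m)) (i : Fin m) :
    TangentSpace (𝓡 m) ((chartAt (EuclideanSpace ℝ (Fin m)) p).symm y) :=
  mfderiv 𝓘(ℝ, EuclideanSpace ℝ (Fin m)) (𝓡 m)
    (chartAt (EuclideanSpace ℝ (Fin m)) p).symm y (EuclideanSpace.single i (1 : ℝ))

/-- The matrix `g_{ij}(y) = ⟨∂_i, ∂_j⟩` of the Riemannian metric in the preferred chart at `p`. -/
def gramMatrix (p : M) (y : EuclideanSpace ℝ (Fin m)) : Matrix (Fin m) (Fin m) ℝ :=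
  Matrix.of fun i j => ⟪coordVector p y i, coordVector p y j⟫

/-- The Riemannian volume of the domain of the preferred chart at `p`: the measure that reads
`√(det g_{ij}) dy` in this chart, extended by zero outside the domain of the chart. -/
def chartVolume [MeasurableSpace M] (p : M) : Measure M :=
  (((volume : Measure (EuclideanSpace ℝ (Fin m))).withDensity
      fun y => ENNReal.ofReal (Real.sqrt (gramMatrix p y).det)).restrict
        (chartAt (EuclideanSpace ℝ (Fin m)) p).target).map
    (chartAt (EuclideanSpace ℝ (Fin m)) p).symm

variable (m M) in
/-- The Riemannian volume measure: the smallest measure on `M` that dominates all the measures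
`√(det g_{ij}) dy` of the charts. These agree on the overlaps, so on a second countable manifold
this is the unique Borel measure which reads `√(det g_{ij}) dy` in each chart. -/
def riemannianVolume [MeasurableSpace M] : Measure M :=
  ⨆ p : M, chartVolume (m := m) p

variable (m) in
/-- The weighted volume growth `c_0^w(M) = liminf_{R → +∞} log (∫_{B_R(o)} w) / R`, as an
extended real number. -/
def weightedGrowth [MeasurableSpace M] (w : M → ℝ) (o : M) : EReal :=
  liminf (fun R : ℝ =>
    ENNReal.log (∫⁻ x in ball o R, ENNReal.ofReal (w x) ∂(riemannianVolume m M)) / (R : EReal))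
    atTop

end Volume

/-! ## Hypersurfaces of `ℝ^{m+1}` -/

section Hypersurface

variable {m : ℕ} {M : Type*} [MetricSpace M] [ChartedSpace (EuclideanSpace ℝ (Fin m)) M]

/-- The differential at `x` of a map from `M` to `ℝ^{m+1}`. -/
def diff (f : M → EuclideanSpace ℝ (Fin (m + 1))) (x : M) :
    TangentSpace (𝓡 m) x →L[ℝ] EuclideanSpace ℝ (Fin (m + 1)) :=
  mfderiv (𝓡 m) 𝓘(ℝ, EuclideanSpace ℝ (Fin (m + 1))) f x

/-- `ν` is a spherical Gauss map of the immersion `ψ`: a smooth unit normal field along `ψ`.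
Such a field amounts to an orientation of the hypersurface. -/
structure IsGaussMap (ψ ν : M → EuclideanSpace ℝ (Fin (m + 1))) : Prop where
  contMDiff : ContMDiff (𝓡 m) 𝓘(ℝ, EuclideanSpace ℝ (Fin (m + 1))) ∞ ν
  norm_eq_one : ∀ x, ‖ν x‖ = 1
  normal : ∀ x (u : TangentSpace (𝓡 m) x), ⟪diff ψ x u, ν x⟫ = 0

/-- The second fundamental form of `ψ` in the direction of `ν`: `A(u, w) = -⟨dν(u), dψ(w)⟩`. -/
def secondFundForm (ψ ν : M → EuclideanSpace ℝ (Fin (m + 1))) (x : M)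
    (u w : TangentSpace (𝓡 m) x) : ℝ :=
  -⟪diff ν x u, diff ψ x w⟫

/-- The normal part of a vector `y` at `x`: its orthogonal projection to the orthogonal
complement of `dψ(T_x M)`. -/
def normalPart (ψ : M → EuclideanSpace ℝ (Fin (m + 1))) (x : M)
    (y : EuclideanSpace ℝ (Fin (m + 1))) : EuclideanSpace ℝ (Fin (m + 1)) :=
  ((diff ψ x).range)ᗮ.starProjection y

variable [RiemannianBundle (fun x : M => TangentSpace (𝓡 m) x)]

instance (x : M) : FiniteDimensional ℝ (TangentSpace (𝓡 m) x) :=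
  inferInstanceAs (FiniteDimensional ℝ (EuclideanSpace ℝ (Fin m)))

/-- `ψ` is a (smooth) isometric immersion: its differentials preserve the inner product. -/
structure IsIsometricImmersion (ψ : M → EuclideanSpace ℝ (Fin (m + 1))) : Prop where
  contMDiff : ContMDiff (𝓡 m) 𝓘(ℝ, EuclideanSpace ℝ (Fin (m + 1))) ∞ ψ
  inner_diff : ∀ x (u w : TangentSpace (𝓡 m) x), ⟪diff ψ x u, diff ψ x w⟫ = ⟪u, w⟫

/-- The norm `|A| = (∑_{i,j} A(e_i, e_j)²)^{1/2}` of the second fundamental form at `x`, for an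
orthonormal basis `e_i` of `T_x M`. -/
def normA (ψ ν : M → EuclideanSpace ℝ (Fin (m + 1))) (x : M) : ℝ :=
  Real.sqrt (∑ i, ∑ j,
    secondFundForm ψ ν x (stdOrthonormalBasis ℝ (TangentSpace (𝓡 m) x) i)
      (stdOrthonormalBasis ℝ (TangentSpace (𝓡 m) x) j) ^ 2)

/-- The mean curvature vector `𝐇 = (1/m) tr(A) ν`, with the trace taken in an orthonormal basis
of `T_x M`. -/
def meanCurvatureVector (ψ ν : M → EuclideanSpace ℝ (Fin (m + 1))) (x : M) :
    EuclideanSpace ℝ (Fin (m + 1)) :=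
  ((1 / (m : ℝ)) * ∑ i,
    secondFundForm ψ ν x (stdOrthonormalBasis ℝ (TangentSpace (𝓡 m) x) i)
      (stdOrthonormalBasis ℝ (TangentSpace (𝓡 m) x) i)) • ν x

/-- `ψ`, with Gauss map `ν`, is a mean curvature flow soliton with respect to the position vector
field, with soliton constant `c`: `m 𝐇 = c ψ^⊥`. -/
def IsSoliton (ψ ν : M → EuclideanSpace ℝ (Fin (m + 1))) (c : ℝ) : Prop :=
  ∀ x, (m : ℝ) • meanCurvatureVector ψ ν x = c • normalPart ψ x (ψ x)

end Hypersurface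

end MCFSoliton

end

noncomputable section

namespace MCFSoliton

open scoped Topology NNReal

section Divergence

variable {E : Type*} [NormedAddCommGroup E] [InnerProductSpace ℝ E]

/-- A `C^n` field on an open set, multiplied by a cutoff supported in that set, is `C^n`. -/
theorem contDiff_smul_of_tsupport_subset {F : Type*} [NormedAddCommGroup F] [NormedSpace ℝ F]
    {n : WithTop ℕ∞} {U : Set E} (hU : IsOpen U) {θ : E → ℝ} {X : E → F} (hθ : ContDiff ℝ n θ)
    (hθU : tsupport θ ⊆ U) (hX : ContDiffOn ℝ n X U) : ContDiff ℝ n (fun y => θ y • X y) := by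
  rw [contDiff_iff_contDiffAt]
  intro y
  by_cases hy : y ∈ U
  · exact hθ.contDiffAt.smul (hX.contDiffAt (hU.mem_nhds hy))
  · have h0 : (fun z => θ z • X z) =ᶠ[𝓝 y] fun _ => 0 := by
      have : y ∉ tsupport θ := fun h => hy (hθU h)
      filter_upwards [(isClosed_tsupport θ).isOpen_compl.mem_nhds this] with z hz
      simp [image_eq_zero_of_notMem_tsupport hz]
    exact contDiffAt_const.congr_of_eventuallyEq h0

variable [FiniteDimensional ℝ E]

/-- A smooth cutoff equal to one on a compact set, with compact support in an open set. -/
theorem exists_contDiff_cutoff {K U : Set E} (hK : IsCompact K) (hU : IsOpen U) (hKU : K ⊆ U) :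
    ∃ θ : E → ℝ, ContDiff ℝ ∞ θ ∧ HasCompactSupport θ ∧ tsupport θ ⊆ U ∧ ∀ y ∈ K, θ y = 1 := by
  obtain ⟨L, hL, hKL, hLU⟩ := exists_compact_between hK hU hKU
  obtain ⟨θ, hθ, -, hs, h1⟩ := exists_contMDiff_support_eq_eq_one_iff (n := ⊤) 𝓘(ℝ, E)
    isOpen_interior hK.isClosed hKL
  have hsub : tsupport θ ⊆ L := by
    rw [tsupport, hs]
    exact closure_minimal interior_subset hL.isClosed
  exact ⟨θ, hθ.contDiff, hL.of_isClosed_subset (isClosed_tsupport θ) hsub, hsub.trans hLU,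
    fun y hy => (h1 y).1 hy⟩

variable [MeasurableSpace E] [BorelSpace E]

/-- The divergence theorem for a `C¹` field tested against a compactly supported Lipschitz
function. -/
theorem integral_fderiv_apply_eq_neg {U : Set E} (hU : IsOpen U) {X : E → E}
    (hX : ContDiffOn ℝ 1 X U) {g : E → ℝ} {C : ℝ≥0} (hg : LipschitzWith C g)
    (hgc : HasCompactSupport g) (hgU : tsupport g ⊆ U) :
    Integrable (fun y => fderiv ℝ g y (X y)) ∧
    Integrable (fun y => g y * LinearMap.trace ℝ E (fderiv ℝ X y : E →ₗ[ℝ] E)) ∧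
    ∫ y, fderiv ℝ g y (X y) = - ∫ y, g y * LinearMap.trace ℝ E (fderiv ℝ X y : E →ₗ[ℝ] E) := by
  obtain ⟨θ, hθ, hθc, hθU, hθ1⟩ := exists_contDiff_cutoff hgc hU hgU
  set Z : E → E := fun y => θ y • X y with hZ
  have hZd : ContDiff ℝ 1 Z :=
    contDiff_smul_of_tsupport_subset hU (hθ.of_le (by exact_mod_cast le_top)) hθU hX
  have hZc : HasCompactSupport Z := hθc.smul_right
  let B := stdOrthonormalBasis ℝ E
  have hZi : ∀ i, ContDiff ℝ 1 (fun y => ⟪B i, Z y⟫) := fun i => contDiff_const.inner ℝ hZd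
  have hZic : ∀ i, HasCompactSupport (fun y => ⟪B i, Z y⟫) := fun i =>
    hZc.comp_left (g := fun z => ⟪B i, z⟫) (by simp)
  have hL : ∀ i, ∃ D : ℝ≥0, LipschitzWith D (fun y => ⟪B i, Z y⟫) := fun i =>
    (hZi i).lipschitzWith_of_hasCompactSupport (hZic i) one_ne_zero
  choose D hD using hL
  have hZX : ∀ y ∈ tsupport g, Z y = X y := fun y hy => by simp [hZ, hθ1 y hy]
  -- the terms of the sum
  have int1 : ∀ i, Integrable (fun y => lineDeriv ℝ (fun y => ⟪B i, Z y⟫) y (B i) * g y) := by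
    intro i
    have := ((hD i).locallyIntegrable_lineDeriv (μ := (volume : Measure E)) (B i)
      ).integrable_smul_right_of_hasCompactSupport hg.continuous hgc
    simpa using this
  have int2 : ∀ i, Integrable (fun y => lineDeriv ℝ g y (-B i) * ⟪B i, Z y⟫) := by
    intro i
    have := (hg.locallyIntegrable_lineDeriv (μ := (volume : Measure E)) (-B i)
      ).integrable_smul_right_of_hasCompactSupport (hZi i).continuous (hZic i)
    simpa using this
  have parts : ∀ i, ∫ y, lineDeriv ℝ (fun y => ⟪B i, Z y⟫) y (B i) * g y
      = ∫ y, lineDeriv ℝ g y (-B i) * ⟪B i, Z y⟫ := fun i =>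
    LipschitzWith.integral_lineDeriv_mul_eq (hD i) hg hgc (B i)
  have e1 : (fun y => fderiv ℝ g y (X y)) =ᵐ[volume]
      fun y => - ∑ i, lineDeriv ℝ g y (-B i) * ⟪B i, Z y⟫ := by
    filter_upwards [hg.ae_differentiableAt] with y hy
    have hfd : fderiv ℝ g y (X y) = fderiv ℝ g y (Z y) := by
      by_cases h : y ∈ tsupport g
      · rw [hZX y h]
      · have : fderiv ℝ g y = 0 := by
          have h' : y ∉ tsupport (fderiv ℝ g) := fun h2 => h (tsupport_fderiv_subset ℝ h2)
          exact image_eq_zero_of_notMem_tsupport h'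
        simp [this]
    rw [hfd]
    conv_lhs => rw [← B.sum_repr' (Z y)]
    simp [hy.lineDeriv_eq_fderiv, mul_comm]
  have e2 : (fun y => g y * LinearMap.trace ℝ E (fderiv ℝ X y : E →ₗ[ℝ] E)) =
      fun y => ∑ i, lineDeriv ℝ (fun y => ⟪B i, Z y⟫) y (B i) * g y := by
    funext y
    by_cases h : g y = 0
    · simp [h]
    · have hyo : Function.support g ∈ 𝓝 y := hg.continuous.isOpen_support.mem_nhds h
      have hev : Z =ᶠ[𝓝 y] X := by
        filter_upwards [hyo] with z hz using hZX z (subset_tsupport g hz)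
      have hZdiff : DifferentiableAt ℝ Z y := hZd.differentiable one_ne_zero y
      rw [LinearMap.trace_eq_sum_inner _ B, Finset.mul_sum]
      refine Finset.sum_congr rfl fun i _ => ?_
      have hd : DifferentiableAt ℝ (fun y => ⟪B i, Z y⟫) y :=
        (hZi i).differentiable one_ne_zero y
      rw [hd.lineDeriv_eq_fderiv, fderiv_inner_apply ℝ (differentiableAt_const _) hZdiff,
        hev.fderiv_eq]
      simp [mul_comm]
  refine ⟨?_, ?_, ?_⟩
  · exact ((integrable_finsetSum _ fun i _ => int2 i).neg).congr e1.symm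
  · rw [e2]; exact integrable_finsetSum _ fun i _ => int1 i
  · rw [integral_congr_ae e1, e2, integral_neg, integral_finsetSum _ fun i _ => int2 i,
      integral_finsetSum _ fun i _ => int1 i]
    simp [parts]

end Divergence

section Graph

variable {E V : Type*} [NormedAddCommGroup E] [InnerProductSpace ℝ E]
  [NormedAddCommGroup V] [InnerProductSpace ℝ V]

/-- `P` identifies the hyperplane orthogonal to the unit vector `b` with `E`, isometrically, and
is extended by zero to the line spanned by `b`. -/
structure IsHorizontalProj (b : V) (P : V →L[ℝ] E) : Prop where
  norm_eq_one : ‖b‖ = 1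
  inner_eq : ∀ v w, ⟪v, w⟫ = ⟪P v, P w⟫ + ⟪b, v⟫ * ⟪b, w⟫

namespace IsHorizontalProj

variable {b : V} {P : V →L[ℝ] E}

theorem apply_self (hP : IsHorizontalProj b P) : P b = 0 := by
  have h := hP.inner_eq b b
  rw [real_inner_self_eq_norm_sq b, hP.norm_eq_one, real_inner_self_eq_norm_sq] at h
  have : ‖P b‖ ^ 2 = 0 := by linarith
  simpa using this

theorem eq_zero (hP : IsHorizontalProj b P) {v : V} (h1 : P v = 0) (h2 : ⟪b, v⟫ = 0) : v = 0 := by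
  have h := hP.inner_eq v v
  rw [h1, h2] at h
  simpa using h

/-- A vector orthogonal to a non-horizontal vector `n` is determined by its projection. -/
theorem eq_zero_of_inner_eq_zero (hP : IsHorizontalProj b P) {v n : V} (hn : 0 < ⟪b, n⟫)
    (h1 : P v = 0) (h2 : ⟪v, n⟫ = 0) : v = 0 := by
  have h := hP.inner_eq v n
  rw [h1, h2, inner_zero_left, zero_add] at h
  exact hP.eq_zero h1 ((mul_eq_zero.1 h.symm).resolve_right hn.ne')

theorem norm_sq_eq (hP : IsHorizontalProj b P) (v : V) : ‖v‖ ^ 2 = ‖P v‖ ^ 2 + ⟪b, v⟫ ^ 2 := by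
  have h := hP.inner_eq v v
  rw [real_inner_self_eq_norm_sq, real_inner_self_eq_norm_sq] at h
  rw [h]; ring

end IsHorizontalProj

/-- `F`, with unit normal `N`, parametrizes a hypersurface as a graph over the open set `U`. -/
structure IsGraphParam (b : V) (P : V →L[ℝ] E) (U : Set E) (F N : E → V) : Prop where
  isOpen : IsOpen U
  contDiffOn : ContDiffOn ℝ ∞ F U
  contDiffOn_normal : ContDiffOn ℝ ∞ N U
  proj : ∀ y ∈ U, P (F y) = y
  norm_eq_one : ∀ y ∈ U, ‖N y‖ = 1
  normal : ∀ y ∈ U, ∀ v, ⟪fderiv ℝ F y v, N y⟫ = 0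
  pos : ∀ y ∈ U, 0 < ⟪b, N y⟫

/-- In graph coordinates, the tangent vector field `u⁻¹ ∇u`, where `u = ⟨b, N⟩`. -/
def gradField (P : V →L[ℝ] E) (N : E → V) (y : E) : E := -P (fderiv ℝ N y (P (N y)))

namespace IsGraphParam

variable {b : V} {P : V →L[ℝ] E} {U : Set E} {F N : E → V}

theorem contDiffAt (h : IsGraphParam b P U F N) {y : E} (hy : y ∈ U) : ContDiffAt ℝ ∞ F y :=
  h.contDiffOn.contDiffAt (h.isOpen.mem_nhds hy)

theorem contDiffAt_normal (h : IsGraphParam b P U F N) {y : E} (hy : y ∈ U) :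
    ContDiffAt ℝ ∞ N y :=
  h.contDiffOn_normal.contDiffAt (h.isOpen.mem_nhds hy)

theorem differentiableAt (h : IsGraphParam b P U F N) {y : E} (hy : y ∈ U) :
    DifferentiableAt ℝ F y := (h.contDiffAt hy).differentiableAt (by simp)

theorem differentiableAt_normal (h : IsGraphParam b P U F N) {y : E} (hy : y ∈ U) :
    DifferentiableAt ℝ N y := (h.contDiffAt_normal hy).differentiableAt (by simp)

theorem contDiffAt_fderiv (h : IsGraphParam b P U F N) {y : E} (hy : y ∈ U) :
    ContDiffAt ℝ ∞ (fderiv ℝ F) y :=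
  (h.contDiffAt hy).fderiv_right (by simp)

theorem contDiffAt_fderiv_normal (h : IsGraphParam b P U F N) {y : E} (hy : y ∈ U) :
    ContDiffAt ℝ ∞ (fderiv ℝ N) y :=
  (h.contDiffAt_normal hy).fderiv_right (by simp)

theorem contDiffOn_gradField (h : IsGraphParam b P U F N) : ContDiffOn ℝ ∞ (gradField P N) U := by
  intro y hy
  refine ContDiffAt.contDiffWithinAt ?_
  have h1 : ContDiffAt ℝ ∞ (fun y => P (N y)) y :=
    P.contDiff.contDiffAt.comp y (h.contDiffAt_normal hy)
  have h2 := (h.contDiffAt_fderiv_normal hy).clm_apply h1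
  exact (P.contDiff.contDiffAt.comp y h2).neg

theorem proj_fderiv (h : IsGraphParam b P U F N) {y : E} (hy : y ∈ U) (v : E) :
    P (fderiv ℝ F y v) = v := by
  have h1 : HasFDerivAt (fun z => P (F z)) (P.comp (fderiv ℝ F y)) y :=
    P.hasFDerivAt.comp y (h.differentiableAt hy).hasFDerivAt
  have h2 : HasFDerivAt (fun z => P (F z)) (ContinuousLinearMap.id ℝ E) y := by
    refine (hasFDerivAt_id y).congr_of_eventuallyEq ?_
    filter_upwards [h.isOpen.mem_nhds hy] with z hz using h.proj z hz
  exact DFunLike.congr_fun (h1.unique h2) v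

theorem inner_fderiv_normal (h : IsGraphParam b P U F N) {y : E} (hy : y ∈ U) (v : E) :
    ⟪fderiv ℝ N y v, N y⟫ = 0 := by
  have h1 : HasFDerivAt (fun z => ⟪N z, N z⟫) _ y :=
    (h.differentiableAt_normal hy).hasFDerivAt.inner ℝ (h.differentiableAt_normal hy).hasFDerivAt
  have h2 : HasFDerivAt (fun z => ⟪N z, N z⟫) (0 : E →L[ℝ] ℝ) y := by
    refine (hasFDerivAt_const (1 : ℝ) y).congr_of_eventuallyEq ?_
    filter_upwards [h.isOpen.mem_nhds hy] with z hz
    rw [real_inner_self_eq_norm_sq, h.norm_eq_one z hz]; norm_num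
  have h3 := DFunLike.congr_fun (h1.unique h2) v
  simp [fderivInnerCLM_apply, real_inner_comm (N y)] at h3
  linarith [real_inner_comm (fderiv ℝ N y v) (N y)]

/-- A vector orthogonal to the normal is tangent. -/
theorem fderiv_proj (hP : IsHorizontalProj b P) (h : IsGraphParam b P U F N) {y : E} (hy : y ∈ U)
    {z : V} (hz : ⟪z, N y⟫ = 0) : fderiv ℝ F y (P z) = z := by
  have : fderiv ℝ F y (P z) - z = 0 := by
    apply hP.eq_zero_of_inner_eq_zero (h.pos y hy)
    · rw [map_sub, h.proj_fderiv hy, sub_self]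
    · rw [inner_sub_left, h.normal y hy, hz, sub_zero]
  exact sub_eq_zero.1 this

/-- The second fundamental form is symmetric. -/
theorem inner_fderiv_comm (h : IsGraphParam b P U F N) {y : E} (hy : y ∈ U) (v w : E) :
    ⟪fderiv ℝ N y v, fderiv ℝ F y w⟫ = ⟪fderiv ℝ N y w, fderiv ℝ F y v⟫ := by
  have key : ∀ v w : E, ⟪fderiv ℝ N y v, fderiv ℝ F y w⟫
      = -⟪fderiv ℝ (fderiv ℝ F) y v w, N y⟫ := by
    intro v w
    have hF : HasFDerivAt (fun z => fderiv ℝ F z w) _ y :=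
      ((h.contDiffAt_fderiv hy).differentiableAt (by simp)).hasFDerivAt.clm_apply
        (hasFDerivAt_const w y)
    have h1 : HasFDerivAt (fun z => ⟪fderiv ℝ F z w, N z⟫) _ y :=
      hF.inner ℝ (h.differentiableAt_normal hy).hasFDerivAt
    have h2 : HasFDerivAt (fun z => ⟪fderiv ℝ F z w, N z⟫) (0 : E →L[ℝ] ℝ) y := by
      refine (hasFDerivAt_const (0 : ℝ) y).congr_of_eventuallyEq ?_
      filter_upwards [h.isOpen.mem_nhds hy] with z hz using h.normal z hz w
    have h3 := DFunLike.congr_fun (h1.unique h2) v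
    simp [fderivInnerCLM_apply] at h3
    rw [real_inner_comm]
    linarith
  rw [key, key]
  have hs : IsSymmSndFDerivAt ℝ F y :=
    (h.contDiffAt hy).isSymmSndFDerivAt (by
      rw [minSmoothness_of_isRCLikeNormedField]
      exact WithTop.coe_le_coe.2 (le_top : (2 : ℕ∞) ≤ ⊤))
  rw [hs.eq v w]

theorem inner_fderiv_eq (hP : IsHorizontalProj b P) (h : IsGraphParam b P U F N) {y : E}
    (hy : y ∈ U) (v : E) :
    ⟪b, fderiv ℝ F y v⟫ = -⟪b, N y⟫ * ⟪fderiv ℝ F y v, fderiv ℝ F y (P (N y))⟫ := by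
  have ht : ⟪b - ⟪b, N y⟫ • N y, N y⟫ = 0 := by
    rw [inner_sub_left, real_inner_smul_left, real_inner_self_eq_norm_sq, h.norm_eq_one y hy]
    ring
  have h1 := h.fderiv_proj hP hy ht
  rw [map_sub, hP.apply_self, map_smul, zero_sub, map_neg, map_smul] at h1
  have h2 : ⟪fderiv ℝ F y v, b - ⟪b, N y⟫ • N y⟫ = ⟪b, fderiv ℝ F y v⟫ := by
    rw [inner_sub_right, real_inner_smul_right, h.normal y hy, real_inner_comm]; ring
  rw [← h2, ← h1, inner_neg_right, real_inner_smul_right]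
  ring

theorem fderiv_gradField (hP : IsHorizontalProj b P) (h : IsGraphParam b P U F N) {y : E}
    (hy : y ∈ U) : fderiv ℝ F y (gradField P N y) = -fderiv ℝ N y (P (N y)) := by
  rw [gradField, map_neg, h.fderiv_proj hP hy (h.inner_fderiv_normal hy _)]

/-- The derivative of `u = ⟨b, N⟩` along its gradient. -/
theorem inner_fderiv_normal_gradField (hP : IsHorizontalProj b P) (h : IsGraphParam b P U F N)
    {y : E} (hy : y ∈ U) :
    ⟪b, fderiv ℝ N y (gradField P N y)⟫
      = ⟪b, N y⟫ * ‖fderiv ℝ F y (gradField P N y)‖ ^ 2 := by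
  have h1 := h.fderiv_proj hP hy (h.inner_fderiv_normal hy (gradField P N y))
  rw [← h1, h.inner_fderiv_eq hP hy, h1, h.inner_fderiv_comm hy, ← real_inner_self_eq_norm_sq]
  conv_rhs => rw [h.fderiv_gradField hP hy]
  rw [h.fderiv_gradField hP hy, inner_neg_right, inner_neg_right, inner_neg_left]
  ring

variable [FiniteDimensional ℝ E]

/-- The divergence of the weighted field `e^{c|F|²/2} u⁻¹ ∇u` on a graph which is a soliton. -/
theorem trace_fderiv_weighted_gradField (hP : IsHorizontalProj b P)
    (h : IsGraphParam b P U F N) {c : ℝ}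
    (hc : ∀ y ∈ U, LinearMap.trace ℝ E (P.comp (fderiv ℝ N y) : E →L[ℝ] E) = -(c * ⟪F y, N y⟫))
    {y : E} (hy : y ∈ U) :
    LinearMap.trace ℝ E
      (fderiv ℝ (fun z => Real.exp (c * (‖F z‖ ^ 2 / 2)) • gradField P N z) y : E →L[ℝ] E)
      = -(Real.exp (c * (‖F y‖ ^ 2 / 2)) *
        LinearMap.trace ℝ E ((P.comp (fderiv ℝ N y)).comp (P.comp (fderiv ℝ N y)) : E →L[ℝ] E))
      := by
  let B := stdOrthonormalBasis ℝ E
  have hF := (h.differentiableAt hy).hasFDerivAt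
  have hN := (h.differentiableAt_normal hy).hasFDerivAt
  have hDN := ((h.contDiffAt_fderiv_normal hy).differentiableAt (by simp)).hasFDerivAt
  have hw : HasFDerivAt (fun z => Real.exp (c * (‖F z‖ ^ 2 / 2)))
      ((Real.exp (c * (‖F y‖ ^ 2 / 2)) * c) • (innerSL ℝ (F y)).comp (fderiv ℝ F y)) y := by
    have h1 := (((hF.norm_sq).mul_const (1 / 2 : ℝ)).const_mul c).exp
    refine (h1.congr_of_eventuallyEq (Eventually.of_forall fun z => ?_)).congr_fderiv ?_
    · simp only []; congr 1; ring
    · ext v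
      simp only [smul_apply, ContinuousLinearMap.comp_apply, smul_eq_mul]
      have : c * (‖F y‖ ^ 2 * (1 / 2)) = c * (‖F y‖ ^ 2 / 2) := by ring
      rw [this]; ring
  have hY : HasFDerivAt (gradField P N) (-(P.comp ((fderiv ℝ N y).comp (P.comp (fderiv ℝ N y)) +
      (fderiv ℝ (fderiv ℝ N) y).flip (P (N y))))) y := by
    have h1 := hDN.clm_apply (P.hasFDerivAt.comp y hN)
    exact (P.hasFDerivAt.comp y h1).neg
  rw [(hw.fun_smul hY).fderiv]
  -- differentiate the soliton equation in the direction `P N`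
  have hH : ∑ i, ⟪B i, P (fderiv ℝ (fderiv ℝ N) y (P (N y)) (B i))⟫
      = -(c * ⟪F y, fderiv ℝ N y (P (N y))⟫) := by
    have h1 : HasFDerivAt (fun z => ∑ i, ⟪B i, P (fderiv ℝ N z (B i))⟫)
        (∑ i, (innerSL ℝ (B i)).comp (P.comp ((fderiv ℝ (fderiv ℝ N) y).flip (B i)))) y := by
      refine HasFDerivAt.fun_sum fun i _ => ?_
      have h2 := hDN.clm_apply (hasFDerivAt_const (B i) y)
      have h3 := (innerSL ℝ (B i)).hasFDerivAt.comp y (P.hasFDerivAt.comp y h2)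
      refine h3.congr_fderiv ?_
      ext v; simp
    have h2 : HasFDerivAt (fun z => -(c * ⟪F z, N z⟫)) _ y := ((hF.inner ℝ hN).const_mul c).neg
    have h3 : (fun z => ∑ i, ⟪B i, P (fderiv ℝ N z (B i))⟫) =ᶠ[𝓝 y]
        fun z => -(c * ⟪F z, N z⟫) := by
      filter_upwards [h.isOpen.mem_nhds hy] with z hz
      rw [← hc z hz, LinearMap.trace_eq_sum_inner _ B]
      rfl
    have h4 := DFunLike.congr_fun (h1.unique (h2.congr_of_eventuallyEq h3)) (P (N y))
    simp only [sum_apply, ContinuousLinearMap.comp_apply,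
      ContinuousLinearMap.flip_apply, innerSL_apply_apply] at h4
    rw [h4]
    simp [fderivInnerCLM_apply, h.normal y hy]
  have hsymm : IsSymmSndFDerivAt ℝ N y := (h.contDiffAt_normal hy).isSymmSndFDerivAt (by
      rw [minSmoothness_of_isRCLikeNormedField]
      exact WithTop.coe_le_coe.2 (le_top : (2 : ℕ∞) ≤ ⊤))
  have hYF : ⟪F y, fderiv ℝ F y (gradField P N y)⟫ = -⟪F y, fderiv ℝ N y (P (N y))⟫ := by
    rw [h.fderiv_gradField hP hy, inner_neg_right]
  have hexp : ∑ i, ⟪B i, ⟪F y, fderiv ℝ F y (B i)⟫ • gradField P N y⟫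
      = ⟪F y, fderiv ℝ F y (gradField P N y)⟫ := by
    conv_rhs => rw [← B.sum_repr' (gradField P N y)]
    simp [map_sum, inner_sum, real_inner_smul_right, mul_comm]
  rw [LinearMap.trace_eq_sum_inner _ B, LinearMap.trace_eq_sum_inner _ B]
  have hterm : ∀ i, ⟪B i, (((Real.exp (c * (‖F y‖ ^ 2 / 2))) •
      (-(P.comp ((fderiv ℝ N y).comp (P.comp (fderiv ℝ N y)) +
      (fderiv ℝ (fderiv ℝ N) y).flip (P (N y))))) +
      ((Real.exp (c * (‖F y‖ ^ 2 / 2)) * c) • (innerSL ℝ (F y)).comp (fderiv ℝ F y)).smulRight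
        (gradField P N y) : E →L[ℝ] E) : E →ₗ[ℝ] E) (B i)⟫
      = Real.exp (c * (‖F y‖ ^ 2 / 2)) *
        (c * ⟪B i, ⟪F y, fderiv ℝ F y (B i)⟫ • gradField P N y⟫
        - ⟪B i, P (fderiv ℝ N y (P (fderiv ℝ N y (B i))))⟫
        - ⟪B i, P (fderiv ℝ (fderiv ℝ N) y (P (N y)) (B i))⟫) := by
    intro i
    rw [← hsymm.eq (B i) (P (N y))]
    simp [inner_add_right, inner_neg_right, real_inner_smul_right]
    ring
  rw [Finset.sum_congr rfl fun i _ => hterm i, ← Finset.mul_sum, Finset.sum_sub_distrib,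
    Finset.sum_sub_distrib, ← Finset.mul_sum, hexp, hYF, hH]
  simp
  ring

end IsGraphParam

end Graph

/-- Every unit vector of `ℝ^{m+1}` admits a horizontal projection to `ℝ^m`. -/
theorem exists_isHorizontalProj {m : ℕ} {b : EuclideanSpace ℝ (Fin (m + 1))} (hb : ‖b‖ = 1) :
    ∃ P : EuclideanSpace ℝ (Fin (m + 1)) →L[ℝ] EuclideanSpace ℝ (Fin m),
      IsHorizontalProj b P := by
  have hb0 : b ≠ 0 := by rintro rfl; simp at hb
  have : Fact (Module.finrank ℝ (EuclideanSpace ℝ (Fin (m + 1))) = m + 1) := ⟨by simp⟩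
  let B : OrthonormalBasis (Fin m) ℝ (ℝ ∙ b)ᗮ :=
    OrthonormalBasis.fromOrthogonalSpanSingleton m hb0
  refine ⟨(B.repr.toContinuousLinearEquiv : (ℝ ∙ b)ᗮ →L[ℝ] EuclideanSpace ℝ (Fin m)).comp
    (ℝ ∙ b)ᗮ.orthogonalProjectionOnto, hb, fun v w => ?_⟩
  have h1 : ∀ z, (((ℝ ∙ b)ᗮ.orthogonalProjectionOnto z : (ℝ ∙ b)ᗮ) :
      EuclideanSpace ℝ (Fin (m + 1))) = z - ⟪b, z⟫ • b := by
    intro z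
    have h2 := Submodule.starProjection_add_starProjection_orthogonal (K := ℝ ∙ b) z
    rw [Submodule.starProjection_unit_singleton ℝ hb] at h2
    rw [eq_sub_iff_add_eq]
    exact (add_comm _ _).trans h2
  have h3 : ⟪B.repr ((ℝ ∙ b)ᗮ.orthogonalProjectionOnto v),
      B.repr ((ℝ ∙ b)ᗮ.orthogonalProjectionOnto w)⟫ = ⟪v - ⟪b, v⟫ • b, w - ⟪b, w⟫ • b⟫ := by
    rw [B.repr.inner_map_map, Submodule.coe_inner, h1, h1]
  change ⟪v, w⟫ = ⟪B.repr ((ℝ ∙ b)ᗮ.orthogonalProjectionOnto v),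
      B.repr ((ℝ ∙ b)ᗮ.orthogonalProjectionOnto w)⟫ + _
  rw [h3]
  simp only [inner_sub_left, inner_sub_right, real_inner_smul_left, real_inner_smul_right,
    real_inner_self_eq_norm_sq, hb, real_inner_comm b v]
  ring

open Matrix in
/-- The area element of a hyperplane with unit normal `n`, in terms of its projection. -/
theorem sqrt_det_gram_mul {m : ℕ} {V : Type*} [NormedAddCommGroup V] [InnerProductSpace ℝ V]
    {b : V} {P : V →L[ℝ] EuclideanSpace ℝ (Fin m)} (hP : IsHorizontalProj b P)
    (D : EuclideanSpace ℝ (Fin m) →L[ℝ] V) {n : V} (hn : ‖n‖ = 1) (hD : ∀ v, ⟪D v, n⟫ = 0)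
    (hu : 0 < ⟪b, n⟫) :
    √(Matrix.of fun i j : Fin m =>
      ⟪D (EuclideanSpace.single i 1), D (EuclideanSpace.single j 1)⟫).det * ⟪b, n⟫
      = |(P.comp D).det| := by
  let e : Fin m → EuclideanSpace ℝ (Fin m) := fun i => EuclideanSpace.single i 1
  let A : Matrix (Fin m) (Fin m) ℝ := Matrix.of fun i j => (P (D (e j))) i
  let k : Fin m → ℝ := fun i => -(P n) i / ⟪b, n⟫
  have hdet : (P.comp D).det = A.det := by
    rw [ContinuousLinearMap.det, ← LinearMap.det_toMatrix (EuclideanSpace.basisFun (Fin m) ℝ).toBasis]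
    congr 1
  have hbk : ∀ i, ⟪b, D (e i)⟫ = (k ᵥ* A) i := by
    intro i
    have h1 := hP.inner_eq (D (e i)) n
    rw [hD] at h1
    have h2 : (k ᵥ* A) i = -⟪P (D (e i)), P n⟫ / ⟪b, n⟫ := by
      simp only [vecMul, dotProduct, PiLp.inner_apply, A, k, Matrix.of_apply]
      rw [← Finset.sum_neg_distrib, Finset.sum_div]
      refine Finset.sum_congr rfl fun j _ => ?_
      simp
      ring
    rw [h2, eq_div_iff hu.ne']
    linarith
  have hgram : (Matrix.of fun i j : Fin m => ⟪D (e i), D (e j)⟫)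
      = Aᵀ * (1 + vecMulVec k k) * A := by
    ext i j
    have h2 : (Aᵀ * A) i j = ⟪P (D (e i)), P (D (e j))⟫ := by
      simp [Matrix.mul_apply, PiLp.inner_apply, A, mul_comm]
    have h3 : (Aᵀ * vecMulVec k k * A) i j = (k ᵥ* A) i * (k ᵥ* A) j := by
      rw [mul_vecMulVec, vecMulVec_mul, mulVec_transpose]; rfl
    rw [Matrix.mul_add, Matrix.add_mul, Matrix.mul_one, Matrix.add_apply, h2, h3, ← hbk, ← hbk]
    exact hP.inner_eq _ _
  have hk : k ⬝ᵥ k = ‖P n‖ ^ 2 / ⟪b, n⟫ ^ 2 := by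
    rw [EuclideanSpace.norm_sq_eq, Finset.sum_div, dotProduct]
    refine Finset.sum_congr rfl fun j _ => ?_
    simp [k]; ring
  have hone : (1 + vecMulVec k k).det = 1 / ⟪b, n⟫ ^ 2 := by
    have h1 : vecMulVec k k = replicateCol Unit k * replicateRow Unit k :=
      vecMulVec_eq Unit k k
    rw [h1, det_one_add_replicateCol_mul_replicateRow, hk]
    have h2 := hP.norm_sq_eq n
    rw [hn] at h2
    have : ⟪b, n⟫ ≠ 0 := hu.ne'
    field_simp
    linarith
  change √(Matrix.of fun i j : Fin m => ⟪D (e i), D (e j)⟫).det * ⟪b, n⟫ = _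
  rw [hgram, hdet, Matrix.det_mul, Matrix.det_mul, hone, Matrix.det_transpose]
  have : A.det * (1 / ⟪b, n⟫ ^ 2) * A.det = (A.det / ⟪b, n⟫) ^ 2 := by
    field_simp
  rw [this, Real.sqrt_sq_eq_abs, abs_div, abs_of_pos hu]
  field_simp

/-- The Hopf–Rinow–Cohn-Vossen theorem: a complete locally compact length space is proper. -/
theorem properSpace_of_exists_intermediate {X : Type*} [MetricSpace X] [CompleteSpace X]
    [LocallyCompactSpace X]
    (h : ∀ (x y : X) (r δ : ℝ), 0 ≤ r → r < dist x y → 0 < δ →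
      ∃ z, dist x z ≤ r ∧ dist z y ≤ dist x y - r + δ) : ProperSpace X := by
  refine ⟨fun o r₀ => ?_⟩
  by_contra hr₀
  set S : Set ℝ := {r | 0 ≤ r ∧ ¬ IsCompact (closedBall o r)} with hS
  have hSne : S.Nonempty := by
    refine ⟨r₀, ?_, hr₀⟩
    by_contra hneg
    rw [closedBall_eq_empty.2 (not_le.1 hneg)] at hr₀
    exact hr₀ isCompact_empty
  have hSb : BddBelow S := ⟨0, fun r hr => hr.1⟩
  set R := sInf S with hR
  have hR0 : 0 ≤ R := le_csInf hSne fun r hr => hr.1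
  have hlt : ∀ r, 0 ≤ r → r < R → IsCompact (closedBall o r) := by
    intro r hr0 hr
    by_contra hc
    exact absurd (csInf_le hSb ⟨hr0, hc⟩) (not_le.2 hr)
  have hcR : IsCompact (closedBall o R) := by
    rw [isCompact_iff_totallyBounded_isComplete]
    refine ⟨Metric.totallyBounded_iff.2 fun ε hε => ?_, isClosed_closedBall.isComplete⟩
    set r := max 0 (R - ε / 4) with hr
    have hrc : IsCompact (closedBall o r) := by
      rcases le_total (R - ε / 4) 0 with h0 | h0
      · rw [hr, max_eq_left h0, closedBall_zero]; exact isCompact_singleton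
      · rw [hr, max_eq_right h0]; exact hlt _ h0 (by linarith)
    obtain ⟨t, ht, hcov⟩ := Metric.totallyBounded_iff.1 hrc.totallyBounded (ε / 4) (by linarith)
    refine ⟨t, ht, fun x hx => ?_⟩
    have hxR : dist o x ≤ R := by rw [dist_comm]; exact hx
    have hz : ∃ z, dist o z ≤ r ∧ dist z x ≤ ε / 2 := by
      rcases le_or_gt (dist o x) r with h1 | h1
      · exact ⟨x, h1, by rw [dist_self]; linarith⟩
      · obtain ⟨z, hz1, hz2⟩ := h o x r (ε / 4) (le_max_left _ _) h1 (by linarith)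
        refine ⟨z, hz1, hz2.trans ?_⟩
        have : R - ε / 4 ≤ r := le_max_right _ _
        linarith
    obtain ⟨z, hz1, hz2⟩ := hz
    have hzc := hcov (show z ∈ closedBall o r by rw [mem_closedBall, dist_comm]; exact hz1)
    simp only [mem_iUnion, mem_ball, exists_prop] at hzc ⊢
    obtain ⟨y, hy, hzy⟩ := hzc
    refine ⟨y, hy, ?_⟩
    have := dist_triangle x z y
    rw [dist_comm x z] at this
    linarith
  obtain ⟨δ, hδ, hδc⟩ := hcR.exists_isCompact_cthickening
  have hbig : IsCompact (closedBall o (R + δ / 2)) := by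
    refine hδc.of_isClosed_subset isClosed_closedBall fun x hx => ?_
    have hxR : dist o x ≤ R + δ / 2 := by rw [dist_comm]; exact hx
    rcases le_or_gt (dist o x) R with h1 | h1
    · exact self_subset_cthickening _ (show x ∈ closedBall o R by
        rw [mem_closedBall, dist_comm]; exact h1)
    · obtain ⟨z, hz1, hz2⟩ := h o x R (δ / 2) hR0 h1 (by linarith)
      refine mem_cthickening_of_dist_le x z δ _ ?_ (by rw [dist_comm]; linarith)
      rw [mem_closedBall, dist_comm]; exact hz1
  obtain ⟨r, hr, hrlt⟩ := exists_lt_of_csInf_lt hSne (show sInf S < R + δ / 2 by linarith)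
  exact hr.2 (hbig.of_isClosed_subset isClosed_closedBall (closedBall_subset_closedBall hrlt.le))

/-- A quantity which grows geometrically is not controlled by one of zero exponential growth. -/
theorem eq_zero_of_growth {J : ℝ → ℝ} {W : ℝ → ℝ≥0∞} (hmono : Monotone J) (hJ0 : ∀ R, 0 ≤ J R)
    (hstep : ∀ R, 4 * J R ≤ J (R + 2)) (hJW : ∀ R, ENNReal.ofReal (J R) ≤ W R)
    (hW : liminf (fun R : ℝ => ENNReal.log (W R) / (R : EReal)) atTop = 0) (R : ℝ) : J R = 0 := by
  by_contra hne
  have hpos : 0 < J R := lt_of_le_of_ne (hJ0 R) (Ne.symm hne)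
  have hiter : ∀ k : ℕ, 4 ^ k * J R ≤ J (R + 2 * k) := by
    intro k
    induction k with
    | zero => simp
    | succ k ih =>
      have h1 := hstep (R + 2 * k)
      have h2 : R + 2 * ((k + 1 : ℕ) : ℝ) = R + 2 * k + 2 := by push_cast; ring
      rw [h2, pow_succ]
      linarith
  set C : ℝ := J R * Real.exp (-(R + 2) * Real.log 2) with hC
  have hCpos : 0 < C := mul_pos hpos (Real.exp_pos _)
  have hlog2 : 0 < Real.log 2 := Real.log_pos (by norm_num)
  have hexp : ∀ r, R ≤ r → C * Real.exp (r * Real.log 2) ≤ J r := by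
    intro r hr
    set k := ⌊(r - R) / 2⌋₊ with hk
    have hk1 : (k : ℝ) ≤ (r - R) / 2 := Nat.floor_le (by linarith)
    have hk2 : (r - R) / 2 < k + 1 := Nat.lt_floor_add_one _
    refine le_trans ?_ ((hiter k).trans (hmono (by linarith)))
    have h4 : (4 : ℝ) ^ k = Real.exp (2 * k * Real.log 2) := by
      rw [show 2 * (k : ℝ) * Real.log 2 = k * Real.log (2 ^ 2) by rw [Real.log_pow]; push_cast; ring,
        Real.exp_nat_mul, Real.exp_log (by norm_num)]
      norm_num
    rw [h4, hC, mul_assoc, ← Real.exp_add, mul_comm]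
    refine mul_le_mul_of_nonneg_right (Real.exp_le_exp.2 ?_) hpos.le
    rw [← add_mul]
    exact mul_le_mul_of_nonneg_right (by linarith) hlog2.le
  have hev : ∀ᶠ r : ℝ in atTop, ((Real.log 2 / 2 : ℝ) : EReal)
      ≤ ENNReal.log (W r) / (r : EReal) := by
    filter_upwards [eventually_ge_atTop R, eventually_gt_atTop 0,
      eventually_ge_atTop (-2 * Real.log C / Real.log 2)] with r h1 h2 h3
    have h4 : ENNReal.ofReal (C * Real.exp (r * Real.log 2)) ≤ W r :=
      (ENNReal.ofReal_le_ofReal (hexp r h1)).trans (hJW r)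
    have h5 : ((Real.log C + r * Real.log 2 : ℝ) : EReal) ≤ ENNReal.log (W r) := by
      have := ENNReal.log_le_log h4
      rwa [ENNReal.log_ofReal_of_pos (by positivity), Real.log_mul hCpos.ne' (Real.exp_pos _).ne',
        Real.log_exp] at this
    refine le_trans ?_ (EReal.div_le_div_right_of_nonneg (by exact_mod_cast h2.le) h5)
    rw [← EReal.coe_div, EReal.coe_le_coe_iff, le_div_iff₀ h2]
    rw [div_le_iff₀ hlog2] at h3
    linarith
  have := le_liminf_of_le (by isBoundedDefault) hev
  rw [hW] at this
  have h6 : (Real.log 2 / 2 : ℝ) ≤ 0 := by exact_mod_cast this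
  linarith

section Charts

variable {m : ℕ} {M : Type*} [MetricSpace M] [ChartedSpace (EuclideanSpace ℝ (Fin m)) M]

/-- A chart of `M` given by the horizontal projection of the immersion `ψ`, with smooth inverse
and contained in the domain of a preferred chart. -/
structure IsGraphChart (P : EuclideanSpace ℝ (Fin (m + 1)) →L[ℝ] EuclideanSpace ℝ (Fin m))
    (ψ : M → EuclideanSpace ℝ (Fin (m + 1)))
    (e : OpenPartialHomeomorph M (EuclideanSpace ℝ (Fin m))) : Prop where
  eq_proj : ∀ x ∈ e.source, e x = P (ψ x)
  contMDiffOn_symm : ContMDiffOn (𝓡 m) (𝓡 m) ∞ e.symm e.target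
  exists_source_subset : ∃ q : M, e.source ⊆ (chartAt (EuclideanSpace ℝ (Fin m)) q).source

variable {b : EuclideanSpace ℝ (Fin (m + 1))}
  {P : EuclideanSpace ℝ (Fin (m + 1)) →L[ℝ] EuclideanSpace ℝ (Fin m)}
  {ψ ν : M → EuclideanSpace ℝ (Fin (m + 1))}
  {e : OpenPartialHomeomorph M (EuclideanSpace ℝ (Fin m))}

namespace IsGraphChart

theorem proj_symm (he : IsGraphChart P ψ e) {y : EuclideanSpace ℝ (Fin m)} (hy : y ∈ e.target) :
    P (ψ (e.symm y)) = y := by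
  rw [← he.eq_proj _ (e.map_target hy), e.right_inv hy]

theorem symm_proj (he : IsGraphChart P ψ e) {x : M} (hx : x ∈ e.source) :
    e.symm (P (ψ x)) = x := by
  rw [← he.eq_proj _ hx, e.left_inv hx]

theorem proj_mem_target (he : IsGraphChart P ψ e) {x : M} (hx : x ∈ e.source) :
    P (ψ x) ∈ e.target := by
  rw [← he.eq_proj _ hx]; exact e.map_source hx

theorem contMDiffAt_symm (he : IsGraphChart P ψ e) {y : EuclideanSpace ℝ (Fin m)}
    (hy : y ∈ e.target) : ContMDiffAt (𝓡 m) (𝓡 m) ∞ e.symm y :=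
  he.contMDiffOn_symm.contMDiffAt (e.open_target.mem_nhds hy)

theorem mdifferentiableAt_symm (he : IsGraphChart P ψ e) {y : EuclideanSpace ℝ (Fin m)}
    (hy : y ∈ e.target) : MDifferentiableAt (𝓡 m) (𝓡 m) e.symm y :=
  (he.contMDiffAt_symm hy).mdifferentiableAt (by simp)

/-- Smooth functions on `M` read smoothly in a graph chart. -/
theorem contDiffOn_comp_symm (he : IsGraphChart P ψ e) {W : Type*} [NormedAddCommGroup W]
    [NormedSpace ℝ W] {f : M → W} (hf : ContMDiff (𝓡 m) 𝓘(ℝ, W) ∞ f) :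
    ContDiffOn ℝ ∞ (fun y => f (e.symm y)) e.target :=
  (hf.comp_contMDiffOn he.contMDiffOn_symm).contDiffOn

/-- Two graph charts around the same point have the same inverse near the image of this point. -/
theorem symm_eventuallyEq {e' : OpenPartialHomeomorph M (EuclideanSpace ℝ (Fin m))}
    (he : IsGraphChart P ψ e) (he' : IsGraphChart P ψ e') {x : M} (hx : x ∈ e.source)
    (hx' : x ∈ e'.source) : e.symm =ᶠ[𝓝 (P (ψ x))] e'.symm := by
  have h1 : ContinuousAt e.symm (P (ψ x)) := e.continuousAt_symm (he.proj_mem_target hx)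
  have h2 : ∀ᶠ y in 𝓝 (P (ψ x)), e.symm y ∈ e'.source := by
    refine h1.eventually_mem (e'.open_source.mem_nhds ?_)
    rwa [he.symm_proj hx]
  filter_upwards [h2, e.open_target.mem_nhds (he.proj_mem_target hx)] with y hy hye
  have h3 := he'.symm_proj hy
  rw [he.proj_symm hye] at h3
  exact h3.symm

theorem fderiv_comp_symm (he : IsGraphChart P ψ e) {W : Type*} [NormedAddCommGroup W]
    [NormedSpace ℝ W] {f : M → W} (hf : ContMDiff (𝓡 m) 𝓘(ℝ, W) ∞ f)
    {y : EuclideanSpace ℝ (Fin m)} (hy : y ∈ e.target) (v : EuclideanSpace ℝ (Fin m)) :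
    fderiv ℝ (fun y => f (e.symm y)) y v
      = mfderiv (𝓡 m) 𝓘(ℝ, W) f (e.symm y) (mfderiv (𝓡 m) (𝓡 m) e.symm y v) := by
  have h := mfderiv_comp y (hf.mdifferentiableAt (by simp)) (he.mdifferentiableAt_symm hy)
  rw [← mfderiv_eq_fderiv]
  exact DFunLike.congr_fun h v

/-- In a graph chart, an immersed hypersurface is parametrized as a graph. -/
theorem isGraphParam (he : IsGraphChart P ψ e)
    (hψ : ContMDiff (𝓡 m) 𝓘(ℝ, EuclideanSpace ℝ (Fin (m + 1))) ∞ ψ) (hν : IsGaussMap ψ ν)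
    (hu : ∀ x, 0 < ⟪b, ν x⟫) :
    IsGraphParam b P e.target (fun y => ψ (e.symm y)) (fun y => ν (e.symm y)) where
  isOpen := e.open_target
  contDiffOn := he.contDiffOn_comp_symm hψ
  contDiffOn_normal := he.contDiffOn_comp_symm hν.contMDiff
  proj y hy := he.proj_symm hy
  norm_eq_one y _ := hν.norm_eq_one _
  normal y hy v := by
    rw [he.fderiv_comp_symm hψ hy]
    exact hν.normal _ _
  pos y _ := hu _

end IsGraphChart

variable [RiemannianBundle (fun x : M => TangentSpace (𝓡 m) x)]

theorem injective_proj_diff (hP : IsHorizontalProj b P) (hψ : IsIsometricImmersion ψ)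
    (hν : IsGaussMap ψ ν) (hu : ∀ x, 0 < ⟪b, ν x⟫) (x : M) (v : TangentSpace (𝓡 m) x)
    (hv : P (diff ψ x v) = 0) : v = 0 := by
  have h1 := hP.eq_zero_of_inner_eq_zero (hu x) hv (hν.normal x v)
  have h2 := hψ.inner_diff x v v
  rw [h1, inner_zero_left] at h2
  exact inner_self_eq_zero.1 h2.symm

theorem IsIsometricImmersion.norm_diff (hψ : IsIsometricImmersion ψ) (x : M)
    (v : TangentSpace (𝓡 m) x) : ‖diff ψ x v‖ = ‖v‖ := by
  have h := hψ.inner_diff x v v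
  rw [real_inner_self_eq_norm_sq, real_inner_self_eq_norm_sq] at h
  exact (sq_eq_sq₀ (norm_nonneg _) (norm_nonneg _)).1 h

variable [IsManifold (𝓡 m) ∞ M]

/-- A hypersurface with no horizontal normal has a graph chart around each point. -/
theorem exists_isGraphChart (hP : IsHorizontalProj b P) (hψ : IsIsometricImmersion ψ)
    (hν : IsGaussMap ψ ν) (hu : ∀ x, 0 < ⟪b, ν x⟫) (x : M) :
    ∃ e : OpenPartialHomeomorph M (EuclideanSpace ℝ (Fin m)), IsGraphChart P ψ e ∧
      x ∈ e.source := by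
  set c := chartAt (EuclideanSpace ℝ (Fin m)) x with hc
  let G : EuclideanSpace ℝ (Fin m) → EuclideanSpace ℝ (Fin m) := fun y => P (ψ (c.symm y))
  have hcs : ContMDiffOn (𝓡 m) (𝓡 m) ∞ c.symm c.target := contMDiffOn_chart_symm
  have hF : ContDiffOn ℝ ∞ (fun y => ψ (c.symm y)) c.target :=
    (hψ.contMDiff.comp_contMDiffOn hcs).contDiffOn
  have hG : ∀ y ∈ c.target, ContDiffAt ℝ ∞ G y := fun y hy =>
    P.contDiff.contDiffAt.comp y (hF.contDiffAt (c.open_target.mem_nhds hy))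
  have hinj : ∀ y ∈ c.target, Function.Injective (fderiv ℝ G y) := by
    intro y hy
    rw [injective_iff_map_eq_zero]
    intro v hv
    have hFd : DifferentiableAt ℝ (fun y => ψ (c.symm y)) y :=
      (hF.contDiffAt (c.open_target.mem_nhds hy)).differentiableAt (by simp)
    have hcd : MDifferentiableAt (𝓡 m) (𝓡 m) c.symm y :=
      (hcs.contMDiffAt (c.open_target.mem_nhds hy)).mdifferentiableAt (by simp)
    have h1 : fderiv ℝ G y = P.comp (fderiv ℝ (fun y => ψ (c.symm y)) y) :=
      (P.hasFDerivAt.comp y hFd.hasFDerivAt).fderiv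
    have h2 : fderiv ℝ (fun y => ψ (c.symm y)) y v
        = diff ψ (c.symm y) (mfderiv (𝓡 m) (𝓡 m) c.symm y v) := by
      have h := mfderiv_comp y (hψ.contMDiff.mdifferentiableAt (by simp)) hcd
      rw [← mfderiv_eq_fderiv]
      exact DFunLike.congr_fun h v
    rw [h1, ContinuousLinearMap.comp_apply, h2] at hv
    have h3 := injective_proj_diff hP hψ hν hu _ _ hv
    have h4 := ((mdifferentiable_chart (I := 𝓡 m) x).symm.mfderiv_injective hy)
    exact h4 (h3.trans (map_zero _).symm)
  have heq : ∀ y ∈ c.target, ∃ L : EuclideanSpace ℝ (Fin m) ≃L[ℝ] EuclideanSpace ℝ (Fin m),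
      HasFDerivAt G (L : EuclideanSpace ℝ (Fin m) →L[ℝ] EuclideanSpace ℝ (Fin m)) y := by
    intro y hy
    refine ⟨(LinearEquiv.ofInjectiveEndo (fderiv ℝ G y : _ →ₗ[ℝ] _)
      (hinj y hy)).toContinuousLinearEquiv, ?_⟩
    refine ((hG y hy).differentiableAt (by simp)).hasFDerivAt.congr_fderiv ?_
    ext v : 1
    rfl
  have hxc : c x ∈ c.target := mem_chart_target _ x
  obtain ⟨L, hL⟩ := heq (c x) hxc
  let g := (hG (c x) hxc).toOpenPartialHomeomorph G hL (by simp)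
  have hgx : c x ∈ g.source := (hG (c x) hxc).mem_toOpenPartialHomeomorph_source hL (by simp)
  have hgG : (g : EuclideanSpace ℝ (Fin m) → EuclideanSpace ℝ (Fin m)) = G := rfl
  refine ⟨c.trans g, ⟨?_, ?_, x, ?_⟩, ?_⟩
  · intro z hz
    have hz' : z ∈ c.source := by simp at hz; exact hz.1
    change P (ψ (c.symm (c z))) = P (ψ z)
    rw [c.left_inv hz']
  · have htar : (c.trans g).target = g.target ∩ g.symm ⁻¹' c.target := by
      simp
    have hgs : ContDiffOn ℝ ∞ g.symm (c.trans g).target := by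
      intro z hz
      rw [htar] at hz
      obtain ⟨L', hL'⟩ := heq _ hz.2
      exact (g.contDiffAt_symm hz.1 hL' (hG _ hz.2)).contDiffWithinAt
    refine hcs.comp hgs.contMDiffOn ?_
    intro z hz
    rw [htar] at hz
    exact hz.2
  · intro z hz
    simp at hz
    exact hz.1
  · simp only [OpenPartialHomeomorph.trans_source, mem_inter_iff, mem_preimage]
    exact ⟨mem_chart_source _ x, hgx⟩

end Charts

section Distance

variable {m : ℕ} {M : Type*} [MetricSpace M] [ChartedSpace (EuclideanSpace ℝ (Fin m)) M]
  [RiemannianBundle (fun x : M => TangentSpace (𝓡 m) x)]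
  [IsRiemannianManifold (𝓡 m) M]

/-- The distance of two points joined by a coordinate segment of a graph chart. -/
theorem dist_symm_le {P : EuclideanSpace ℝ (Fin (m + 1)) →L[ℝ] EuclideanSpace ℝ (Fin m)}
    {ψ : M → EuclideanSpace ℝ (Fin (m + 1))}
    {e : OpenPartialHomeomorph M (EuclideanSpace ℝ (Fin m))} (he : IsGraphChart P ψ e)
    (hψ : IsIsometricImmersion ψ) {y v : EuclideanSpace ℝ (Fin m)} {C : ℝ}
    (hseg : ∀ t ∈ Icc (0 : ℝ) 1, y + t • v ∈ e.target)
    (hC : ∀ t ∈ Icc (0 : ℝ) 1, ‖fderiv ℝ (fun y => ψ (e.symm y)) (y + t • v) v‖ ≤ C) :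
    dist (e.symm y) (e.symm (y + v)) ≤ C := by
  have hC0 : 0 ≤ C := (norm_nonneg _).trans (hC 0 (by simp))
  have hlin : ContDiff ℝ ∞ (fun t : ℝ => y + t • v) := by fun_prop
  have hγ : ContMDiffOn 𝓘(ℝ, ℝ) (𝓡 m) 1 (fun t : ℝ => e.symm (y + t • v)) (Icc 0 1) := by
    refine ContMDiffOn.of_le (n := ∞) ?_ (by exact_mod_cast le_top)
    exact he.contMDiffOn_symm.comp hlin.contMDiff.contMDiffOn hseg
  have h1 := Manifold.riemannianEDist_le_pathELength (I := 𝓡 m) hγ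
    (show e.symm (y + (0 : ℝ) • v) = e.symm y by simp)
    (show e.symm (y + (1 : ℝ) • v) = e.symm (y + v) by simp) zero_le_one
  rw [← IsRiemannianManifold.out (I := 𝓡 m), Manifold.pathELength_eq_lintegral_mfderiv_Icc] at h1
  have h2 : ∫⁻ t in Icc (0 : ℝ) 1, ‖mfderiv 𝓘(ℝ, ℝ) (𝓡 m) (fun t : ℝ => e.symm (y + t • v)) t 1‖ₑ
      ≤ ∫⁻ _ in Icc (0 : ℝ) 1, ENNReal.ofReal C := by
    refine setLIntegral_mono measurable_const fun t ht => ?_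
    have hd : mfderiv 𝓘(ℝ, ℝ) (𝓡 m) (fun t : ℝ => e.symm (y + t • v)) t 1
        = mfderiv (𝓡 m) (𝓡 m) e.symm (y + t • v) v := by
      have h3 := mfderiv_comp (I := 𝓘(ℝ, ℝ)) (I' := 𝓡 m) t (he.mdifferentiableAt_symm (hseg t ht))
        (hlin.contMDiff.mdifferentiableAt (by simp))
      have h4 : mfderiv 𝓘(ℝ, ℝ) (𝓡 m) (fun t : ℝ => y + t • v) t 1 = v := by
        rw [mfderiv_eq_fderiv]
        have h5 : HasFDerivAt (fun t : ℝ => y + t • v)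
            ((ContinuousLinearMap.id ℝ ℝ).smulRight v) t :=
          ((hasFDerivAt_id t).smul_const v).const_add y
        rw [h5.fderiv]
        exact one_smul ℝ v
      have h6 := DFunLike.congr_fun h3 (1 : ℝ)
      refine h6.trans ?_
      exact congrArg (mfderiv (𝓡 m) (𝓡 m) e.symm (y + t • v)) h4
    rw [hd, ← ofReal_norm]
    refine ENNReal.ofReal_le_ofReal ?_
    rw [← hψ.norm_diff]
    have h7 := hC t ht
    rw [he.fderiv_comp_symm hψ.contMDiff (hseg t ht)] at h7
    exact h7
  have h8 := h1.trans h2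
  rw [setLIntegral_const, Real.volume_Icc] at h8
  simp only [sub_zero, ENNReal.ofReal_one, mul_one] at h8
  rw [edist_dist] at h8
  exact (ENNReal.ofReal_le_ofReal_iff hC0).1 h8

/-- A complete Riemannian manifold is proper. -/
theorem properSpace_of_isRiemannianManifold (m : ℕ) (M : Type*) [MetricSpace M]
    [ChartedSpace (EuclideanSpace ℝ (Fin m)) M]
    [RiemannianBundle (fun x : M => TangentSpace (𝓡 m) x)]
    [IsRiemannianManifold (𝓡 m) M] [CompleteSpace M] : ProperSpace M := by
  have : LocallyCompactSpace M := Manifold.locallyCompact_of_finiteDimensional (𝓡 m)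
  refine properSpace_of_exists_intermediate fun x y r δ hr0 hr hδ => ?_
  have hlt : Manifold.riemannianEDist (𝓡 m) x y < ENNReal.ofReal (dist x y + δ) := by
    rw [← IsRiemannianManifold.out (I := 𝓡 m), edist_dist]
    exact (ENNReal.ofReal_lt_ofReal_iff (by positivity)).2 (by linarith)
  obtain ⟨γ, hγ0, hγ1, hγ, hlen⟩ := Manifold.exists_lt_of_riemannianEDist_lt hlt
  have hcont : ContinuousOn (fun t => dist x (γ t)) (Icc 0 1) :=
    (continuous_const.dist continuous_id).comp_continuousOn hγ.continuousOn
  obtain ⟨t, ht, htr⟩ : r ∈ (fun t => dist x (γ t)) '' Icc 0 1 := by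
    refine intermediate_value_Icc zero_le_one hcont ⟨?_, ?_⟩
    · simp [hγ0, hr0]
    · simp [hγ1, hr.le]
  refine ⟨γ t, le_of_eq htr, ?_⟩
  have h1 := Manifold.riemannianEDist_le_pathELength (I := 𝓡 m)
    (hγ.mono (Icc_subset_Icc_right ht.2)) hγ0 rfl ht.1
  have h2 := Manifold.riemannianEDist_le_pathELength (I := 𝓡 m)
    (hγ.mono (Icc_subset_Icc_left ht.1)) rfl hγ1 ht.2
  rw [← IsRiemannianManifold.out (I := 𝓡 m), edist_dist] at h1 h2
  have h3 := (add_le_add h1 h2).trans_lt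
    ((Manifold.pathELength_add (I := 𝓡 m) (γ := γ) ht.1 ht.2).trans_lt hlen)
  rw [← ENNReal.ofReal_add dist_nonneg dist_nonneg,
    ENNReal.ofReal_lt_ofReal_iff (by positivity)] at h3
  have htr' : dist x (γ t) = r := htr
  linarith

end Distance

section Shape

variable {m : ℕ} {M : Type*} [MetricSpace M] [ChartedSpace (EuclideanSpace ℝ (Fin m)) M]
  {b : EuclideanSpace ℝ (Fin (m + 1))}
  {P : EuclideanSpace ℝ (Fin (m + 1)) →L[ℝ] EuclideanSpace ℝ (Fin m)}
  {ψ ν : M → EuclideanSpace ℝ (Fin (m + 1))}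
  {e : OpenPartialHomeomorph M (EuclideanSpace ℝ (Fin m))}

/-- The shape operator, up to sign, read in the tangent space. -/
def chartShape (P : EuclideanSpace ℝ (Fin (m + 1)) →L[ℝ] EuclideanSpace ℝ (Fin m))
    (ν : M → EuclideanSpace ℝ (Fin (m + 1)))
    (e : OpenPartialHomeomorph M (EuclideanSpace ℝ (Fin m))) (y : EuclideanSpace ℝ (Fin m)) :
    TangentSpace (𝓡 m) (e.symm y) →ₗ[ℝ] TangentSpace (𝓡 m) (e.symm y) where
  toFun t := mfderiv (𝓡 m) (𝓡 m) e.symm y (P (diff ν (e.symm y) t))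
  map_add' s t := by
    rw [map_add, map_add]
    exact map_add (mfderiv (𝓡 m) (𝓡 m) e.symm y) _ _
  map_smul' r t := by
    rw [map_smul, map_smul]
    exact map_smul (mfderiv (𝓡 m) (𝓡 m) e.symm y) _ _

theorem trace_proj_fderiv_normal (hν : IsGaussMap ψ ν) (he : IsGraphChart P ψ e)
    {y : EuclideanSpace ℝ (Fin m)} (hy : y ∈ e.target) :
    LinearMap.trace ℝ (EuclideanSpace ℝ (Fin m))
      (P.comp (fderiv ℝ (fun y => ν (e.symm y)) y) : _ →L[ℝ] EuclideanSpace ℝ (Fin m))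
      = LinearMap.trace ℝ (TangentSpace (𝓡 m) (e.symm y)) (chartShape P ν e y) := by
  let K : EuclideanSpace ℝ (Fin m) →ₗ[ℝ] TangentSpace (𝓡 m) (e.symm y) :=
    (mfderiv (𝓡 m) (𝓡 m) e.symm y).toLinearMap
  let D : TangentSpace (𝓡 m) (e.symm y) →ₗ[ℝ] EuclideanSpace ℝ (Fin m) :=
    (P.comp (diff ν (e.symm y))).toLinearMap
  have h1 : ((P.comp (fderiv ℝ (fun y => ν (e.symm y)) y) :
      EuclideanSpace ℝ (Fin m) →L[ℝ] EuclideanSpace ℝ (Fin m)) :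
      EuclideanSpace ℝ (Fin m) →ₗ[ℝ] EuclideanSpace ℝ (Fin m)) = D ∘ₗ K := by
    ext1 v
    exact congrArg P (he.fderiv_comp_symm hν.contMDiff hy v)
  have h2 : chartShape P ν e y = K ∘ₗ D := rfl
  rw [h1, h2]
  exact LinearMap.trace_comp_comm' K D

theorem trace_proj_fderiv_normal_sq (hν : IsGaussMap ψ ν) (he : IsGraphChart P ψ e)
    {y : EuclideanSpace ℝ (Fin m)} (hy : y ∈ e.target) :
    LinearMap.trace ℝ (EuclideanSpace ℝ (Fin m))
      ((P.comp (fderiv ℝ (fun y => ν (e.symm y)) y)).comp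
        (P.comp (fderiv ℝ (fun y => ν (e.symm y)) y)) : _ →L[ℝ] EuclideanSpace ℝ (Fin m))
      = LinearMap.trace ℝ (TangentSpace (𝓡 m) (e.symm y))
        (chartShape P ν e y ∘ₗ chartShape P ν e y) := by
  let K : EuclideanSpace ℝ (Fin m) →ₗ[ℝ] TangentSpace (𝓡 m) (e.symm y) :=
    (mfderiv (𝓡 m) (𝓡 m) e.symm y).toLinearMap
  let D : TangentSpace (𝓡 m) (e.symm y) →ₗ[ℝ] EuclideanSpace ℝ (Fin m) :=
    (P.comp (diff ν (e.symm y))).toLinearMap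
  have h0 : ∀ v, P (fderiv ℝ (fun y => ν (e.symm y)) y v) = D (K v) := fun v =>
    congrArg P (he.fderiv_comp_symm hν.contMDiff hy v)
  have h1 : (((P.comp (fderiv ℝ (fun y => ν (e.symm y)) y)).comp
      (P.comp (fderiv ℝ (fun y => ν (e.symm y)) y)) :
      EuclideanSpace ℝ (Fin m) →L[ℝ] EuclideanSpace ℝ (Fin m)) :
      EuclideanSpace ℝ (Fin m) →ₗ[ℝ] EuclideanSpace ℝ (Fin m)) = (D ∘ₗ K ∘ₗ D) ∘ₗ K := by
    ext1 v
    change P (fderiv ℝ _ y (P (fderiv ℝ _ y v))) = D (K (D (K v)))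
    rw [h0, h0]
  have h2 : chartShape P ν e y ∘ₗ chartShape P ν e y = K ∘ₗ (D ∘ₗ K ∘ₗ D) := rfl
  rw [h1, h2]
  exact LinearMap.trace_comp_comm' K (D ∘ₗ K ∘ₗ D)

variable [RiemannianBundle (fun x : M => TangentSpace (𝓡 m) x)]

/-- Every tangent vector comes from its horizontal projection. -/
theorem mfderiv_symm_proj_diff (hP : IsHorizontalProj b P) (hψ : IsIsometricImmersion ψ)
    (hν : IsGaussMap ψ ν) (hu : ∀ x, 0 < ⟪b, ν x⟫) (he : IsGraphChart P ψ e)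
    {y : EuclideanSpace ℝ (Fin m)} (hy : y ∈ e.target) (t : TangentSpace (𝓡 m) (e.symm y)) :
    mfderiv (𝓡 m) (𝓡 m) e.symm y (P (diff ψ (e.symm y) t)) = t := by
  have hg := he.isGraphParam hψ.contMDiff hν hu
  refine sub_eq_zero.1 (injective_proj_diff hP hψ hν hu _ _ ?_)
  have h1 := hg.proj_fderiv hy (P (diff ψ (e.symm y) t))
  rw [he.fderiv_comp_symm hψ.contMDiff hy] at h1
  rw [map_sub, map_sub, sub_eq_zero]
  exact h1

theorem secondFundForm_eq (hP : IsHorizontalProj b P) (hψ : IsIsometricImmersion ψ)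
    (hν : IsGaussMap ψ ν) (hu : ∀ x, 0 < ⟪b, ν x⟫) (he : IsGraphChart P ψ e)
    {y : EuclideanSpace ℝ (Fin m)} (hy : y ∈ e.target) (s t : TangentSpace (𝓡 m) (e.symm y)) :
    secondFundForm ψ ν (e.symm y) s t = -⟪chartShape P ν e y s, t⟫ := by
  have hg := he.isGraphParam hψ.contMDiff hν hu
  have h1 := hg.fderiv_proj hP hy (hg.inner_fderiv_normal hy (P (diff ψ (e.symm y) s)))
  rw [he.fderiv_comp_symm hν.contMDiff hy, mfderiv_symm_proj_diff hP hψ hν hu he hy,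
    he.fderiv_comp_symm hψ.contMDiff hy] at h1
  rw [secondFundForm, ← hψ.inner_diff]
  congr 2
  exact h1.symm

theorem inner_chartShape_comm (hP : IsHorizontalProj b P) (hψ : IsIsometricImmersion ψ)
    (hν : IsGaussMap ψ ν) (hu : ∀ x, 0 < ⟪b, ν x⟫) (he : IsGraphChart P ψ e)
    {y : EuclideanSpace ℝ (Fin m)} (hy : y ∈ e.target) (s t : TangentSpace (𝓡 m) (e.symm y)) :
    ⟪chartShape P ν e y s, t⟫ = ⟪s, chartShape P ν e y t⟫ := by
  have hg := he.isGraphParam hψ.contMDiff hν hu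
  have h1 := hg.inner_fderiv_comm hy (P (diff ψ (e.symm y) s)) (P (diff ψ (e.symm y) t))
  simp only [he.fderiv_comp_symm hν.contMDiff hy, he.fderiv_comp_symm hψ.contMDiff hy,
    mfderiv_symm_proj_diff hP hψ hν hu he hy] at h1
  have h2 := secondFundForm_eq hP hψ hν hu he hy s t
  have h3 := secondFundForm_eq hP hψ hν hu he hy t s
  rw [real_inner_comm (chartShape P ν e y t) s]
  unfold secondFundForm at h2 h3
  have h1' : ⟪diff ν (e.symm y) s, diff ψ (e.symm y) t⟫
    = ⟪diff ν (e.symm y) t, diff ψ (e.symm y) s⟫ := h1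
  rw [h1'] at h2
  linarith

/-- The squared norm of the second fundamental form in graph coordinates. -/
theorem trace_proj_fderiv_normal_sq_eq (hP : IsHorizontalProj b P) (hψ : IsIsometricImmersion ψ)
    (hν : IsGaussMap ψ ν) (hu : ∀ x, 0 < ⟪b, ν x⟫) (he : IsGraphChart P ψ e)
    {y : EuclideanSpace ℝ (Fin m)} (hy : y ∈ e.target) :
    LinearMap.trace ℝ (EuclideanSpace ℝ (Fin m))
      ((P.comp (fderiv ℝ (fun y => ν (e.symm y)) y)).comp
        (P.comp (fderiv ℝ (fun y => ν (e.symm y)) y)) : _ →L[ℝ] EuclideanSpace ℝ (Fin m))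
      = normA ψ ν (e.symm y) ^ 2 := by
  rw [trace_proj_fderiv_normal_sq hν he hy,
    LinearMap.trace_eq_sum_inner _ (stdOrthonormalBasis ℝ (TangentSpace (𝓡 m) (e.symm y))),
    normA, Real.sq_sqrt (Finset.sum_nonneg fun i _ => Finset.sum_nonneg fun j _ => sq_nonneg _)]
  refine Finset.sum_congr rfl fun i _ => ?_
  rw [LinearMap.comp_apply, ← inner_chartShape_comm hP hψ hν hu he hy, real_inner_self_eq_norm_sq,
    ← OrthonormalBasis.sum_sq_inner_left
      (stdOrthonormalBasis ℝ (TangentSpace (𝓡 m) (e.symm y)))]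
  refine Finset.sum_congr rfl fun j _ => ?_
  rw [secondFundForm_eq hP hψ hν hu he hy, neg_sq]

/-- The soliton equation in graph coordinates. -/
theorem trace_proj_fderiv_normal_eq (hP : IsHorizontalProj b P) (hψ : IsIsometricImmersion ψ)
    (hν : IsGaussMap ψ ν) (hu : ∀ x, 0 < ⟪b, ν x⟫) (he : IsGraphChart P ψ e) {c : ℝ}
    (hsol : IsSoliton ψ ν c) {y : EuclideanSpace ℝ (Fin m)} (hy : y ∈ e.target) :
    LinearMap.trace ℝ (EuclideanSpace ℝ (Fin m))
      (P.comp (fderiv ℝ (fun y => ν (e.symm y)) y) : _ →L[ℝ] EuclideanSpace ℝ (Fin m))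
      = -(c * ⟪ψ (e.symm y), ν (e.symm y)⟫) := by
  set x := e.symm y with hx
  let B := stdOrthonormalBasis ℝ (TangentSpace (𝓡 m) x)
  have hm : Module.finrank ℝ (TangentSpace (𝓡 m) x) = m := by
    change Module.finrank ℝ (EuclideanSpace ℝ (Fin m)) = m
    simp
  have h1 : LinearMap.trace ℝ (EuclideanSpace ℝ (Fin m))
      (P.comp (fderiv ℝ (fun y => ν (e.symm y)) y) : _ →L[ℝ] EuclideanSpace ℝ (Fin m))
      = -∑ i, secondFundForm ψ ν x (B i) (B i) := by
    rw [trace_proj_fderiv_normal hν he hy, LinearMap.trace_eq_sum_inner _ B,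
      ← Finset.sum_neg_distrib]
    refine Finset.sum_congr rfl fun i _ => ?_
    rw [secondFundForm_eq hP hψ hν hu he hy, neg_neg, real_inner_comm]
  have h2 : ⟪normalPart ψ x (ψ x), ν x⟫ = ⟪ψ x, ν x⟫ := by
    have hmem : ν x ∈ ((diff ψ x).range)ᗮ := by
      rw [Submodule.mem_orthogonal]
      rintro _ ⟨v, rfl⟩
      exact hν.normal x v
    rw [normalPart, Submodule.inner_starProjection_left_eq_right,
      Submodule.starProjection_eq_self_iff.2 hmem]
  have h3 := congrArg (fun z => ⟪z, ν x⟫) (hsol x)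
  simp only [meanCurvatureVector, real_inner_smul_left, real_inner_self_eq_norm_sq,
    hν.norm_eq_one, h2] at h3
  rw [h1, ← h3]
  rcases Nat.eq_zero_or_pos m with h0 | h0
  · have : IsEmpty (Fin (Module.finrank ℝ (TangentSpace (𝓡 m) x))) := by
      rw [hm, h0]; infer_instance
    simp
  · have : (m : ℝ) ≠ 0 := by positivity
    field_simp
    rfl

end Shape

section Volume

theorem measurableSet_preimage_symm {X Y : Type*} [TopologicalSpace X]
    [TopologicalSpace Y] [MeasurableSpace X] [MeasurableSpace Y] [BorelSpace X] [OpensMeasurableSpace Y]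
    (c : OpenPartialHomeomorph X Y) {S : Set X} (hS : MeasurableSet S) : MeasurableSet (c.symm ⁻¹' S ∩ c.target) := by
  have h1 : Measurable (c.target.domRestrict c.symm) :=
    (continuousOn_iff_continuous_domRestrict.1 c.continuousOn_symm).measurable
  have h2 := c.open_target.measurableSet.subtype_image (h1 hS)
  convert! h2 using 1
  ext y
  simp [and_comm]

variable {m : ℕ} {M : Type*} [MetricSpace M] [ChartedSpace (EuclideanSpace ℝ (Fin m)) M]
  [MeasurableSpace M] [BorelSpace M]
  {b : EuclideanSpace ℝ (Fin (m + 1))}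
  {P : EuclideanSpace ℝ (Fin (m + 1)) →L[ℝ] EuclideanSpace ℝ (Fin m)}
  {ψ ν : M → EuclideanSpace ℝ (Fin (m + 1))}
  {e : OpenPartialHomeomorph M (EuclideanSpace ℝ (Fin m))}

variable [RiemannianBundle (fun x : M => TangentSpace (𝓡 m) x)]

theorem chartVolume_apply (q : M) {S : Set M} (hS : MeasurableSet S) :
    chartVolume (m := m) q S = ∫⁻ y in (chartAt (EuclideanSpace ℝ (Fin m)) q).symm ⁻¹' S ∩
      (chartAt (EuclideanSpace ℝ (Fin m)) q).target,
        ENNReal.ofReal (√(gramMatrix q y).det) := by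
  set c := chartAt (EuclideanSpace ℝ (Fin m)) q with hc
  rw [chartVolume, Measure.map_apply_of_aemeasurable
    (c.continuousOn_symm.aemeasurable c.open_target.measurableSet) hS,
    Measure.restrict_apply' c.open_target.measurableSet,
    withDensity_apply _ (measurableSet_preimage_symm c hS)]

theorem chartVolume_inter_source (q : M) {S : Set M} (hS : MeasurableSet S) :
    chartVolume (m := m) q (S ∩ (chartAt (EuclideanSpace ℝ (Fin m)) q).source)
      = chartVolume (m := m) q S := by
  set c := chartAt (EuclideanSpace ℝ (Fin m)) q with hc
  rw [chartVolume_apply q hS, chartVolume_apply q (hS.inter c.open_source.measurableSet)]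
  congr 2
  ext y
  simp only [mem_inter_iff, mem_preimage, and_assoc]
  exact ⟨fun h => ⟨h.1, h.2.2⟩, fun h => ⟨h.1, c.map_target h.2, h.2⟩⟩

variable [IsManifold (𝓡 m) ∞ M]

/-- The Riemannian volume of a chart, in graph coordinates. -/
theorem chartVolume_eq_lintegral (hP : IsHorizontalProj b P) (hψ : IsIsometricImmersion ψ)
    (hν : IsGaussMap ψ ν) (hu : ∀ x, 0 < ⟪b, ν x⟫) (he : IsGraphChart P ψ e) (q : M) {S : Set M}
    (hS : MeasurableSet S) (hSe : S ⊆ e.source)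
    (hSq : S ⊆ (chartAt (EuclideanSpace ℝ (Fin m)) q).source) :
    chartVolume (m := m) q S
      = ∫⁻ y in (fun x => P (ψ x)) '' S, ENNReal.ofReal (1 / ⟪b, ν (e.symm y)⟫) := by
  set c := chartAt (EuclideanSpace ℝ (Fin m)) q with hc
  have hcs : ContMDiffOn (𝓡 m) (𝓡 m) ∞ c.symm c.target := contMDiffOn_chart_symm
  have hF : ContDiffOn ℝ ∞ (fun y => ψ (c.symm y)) c.target :=
    (hψ.contMDiff.comp_contMDiffOn hcs).contDiffOn
  set s := c.symm ⁻¹' S ∩ c.target with hs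
  have hsm : MeasurableSet s := measurableSet_preimage_symm c hS
  have himg : (fun x => P (ψ x)) '' S = (fun y => P (ψ (c.symm y))) '' s := by
    ext z
    constructor
    · rintro ⟨x, hx, rfl⟩
      refine ⟨c x, ⟨?_, c.map_source (hSq hx)⟩, ?_⟩
      · simpa [c.left_inv (hSq hx)] using hx
      · simp [c.left_inv (hSq hx)]
    · rintro ⟨y, hy, rfl⟩
      exact ⟨c.symm y, hy.1, rfl⟩
  have hFd : ∀ y ∈ s, HasFDerivAt (fun y => ψ (c.symm y))
      (fderiv ℝ (fun y => ψ (c.symm y)) y) y := fun y hy =>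
    ((hF.contDiffAt (c.open_target.mem_nhds hy.2)).differentiableAt (by simp)).hasFDerivAt
  have hG : ∀ y ∈ s, HasFDerivWithinAt (fun y => P (ψ (c.symm y)))
      (P.comp (fderiv ℝ (fun y => ψ (c.symm y)) y)) s y := fun y hy =>
    (P.hasFDerivAt.comp y (hFd y hy)).hasFDerivWithinAt
  have hinj : InjOn (fun y => P (ψ (c.symm y))) s := by
    intro y hy z hz hyz
    have h1 : c.symm y = c.symm z := by
      rw [← he.symm_proj (hSe hy.1), ← he.symm_proj (hSe hz.1)]
      exact congrArg e.symm hyz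
    rw [← c.right_inv hy.2, ← c.right_inv hz.2, h1]
  rw [chartVolume_apply q hS, himg,
    lintegral_image_eq_lintegral_abs_det_fderiv_mul volume hsm hG hinj]
  refine setLIntegral_congr_fun hsm fun y (hy : y ∈ s) => ?_
  have hd : ∀ v, fderiv ℝ (fun y => ψ (c.symm y)) y v
      = diff ψ (c.symm y) (mfderiv (𝓡 m) (𝓡 m) c.symm y v) := by
    intro v
    have h := mfderiv_comp y (hψ.contMDiff.mdifferentiableAt (by simp))
      ((hcs.contMDiffAt (c.open_target.mem_nhds hy.2)).mdifferentiableAt (by simp))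
    rw [← mfderiv_eq_fderiv]
    exact DFunLike.congr_fun h v
  have hgram : gramMatrix q y = Matrix.of fun i j : Fin m =>
      ⟪fderiv ℝ (fun y => ψ (c.symm y)) y (EuclideanSpace.single i 1),
        fderiv ℝ (fun y => ψ (c.symm y)) y (EuclideanSpace.single j 1)⟫ := by
    ext i j
    simp only [Matrix.of_apply, hd, gramMatrix]
    exact (hψ.inner_diff _ _ _).symm
  have hn : ∀ v, ⟪fderiv ℝ (fun y => ψ (c.symm y)) y v, ν (c.symm y)⟫ = 0 := by
    intro v
    rw [hd]; exact hν.normal _ _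
  simp only []
  rw [hgram, ← sqrt_det_gram_mul hP _ (hν.norm_eq_one (c.symm y)) hn (hu _),
    he.symm_proj (hSe hy.1), ← ENNReal.ofReal_mul (mul_nonneg (Real.sqrt_nonneg _) (hu _).le)]
  congr 1
  have : ⟪b, ν (c.symm y)⟫ ≠ 0 := (hu _).ne'
  field_simp

/-- The Riemannian volume of the domain of a graph chart. -/
theorem riemannianVolume_eq_lintegral (hP : IsHorizontalProj b P) (hψ : IsIsometricImmersion ψ)
    (hν : IsGaussMap ψ ν) (hu : ∀ x, 0 < ⟪b, ν x⟫) (he : IsGraphChart P ψ e) {S : Set M}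
    (hS : MeasurableSet S) (hSe : S ⊆ e.source) :
    riemannianVolume m M S
      = ∫⁻ y in (fun x => P (ψ x)) '' S, ENNReal.ofReal (1 / ⟪b, ν (e.symm y)⟫) := by
  obtain ⟨q, hq⟩ := he.exists_source_subset
  have hes : MeasurableSet e.source := e.open_source.measurableSet
  have hle : ∀ q' : M, (chartVolume (m := m) q').restrict e.source
      ≤ (chartVolume (m := m) q).restrict e.source := by
    intro q'
    refine Measure.le_iff.2 fun T hT => ?_
    set c' := chartAt (EuclideanSpace ℝ (Fin m)) q' with hc'
    have hT' : MeasurableSet (T ∩ e.source) := hT.inter hes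
    rw [Measure.restrict_apply hT, Measure.restrict_apply hT, ← chartVolume_inter_source q' hT',
      chartVolume_eq_lintegral hP hψ hν hu he q' (hT'.inter c'.open_source.measurableSet)
        (inter_subset_left.trans inter_subset_right) inter_subset_right,
      chartVolume_eq_lintegral hP hψ hν hu he q hT' inter_subset_right
        (inter_subset_right.trans hq)]
    exact lintegral_mono_set (image_mono inter_subset_left)
  have hge : chartVolume (m := m) q ≤ riemannianVolume m M := le_iSup (chartVolume (m := m)) q
  have hle2 : riemannianVolume m M ≤ (chartVolume (m := m) q).restrict e.source
      + (riemannianVolume m M).restrict e.sourceᶜ := by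
    refine iSup_le fun q' => ?_
    rw [← Measure.restrict_add_restrict_compl (μ := chartVolume (m := m) q') hes]
    exact add_le_add (hle q')
      (Measure.restrict_mono_measure (le_iSup (chartVolume (m := m)) q') _)
  rw [← chartVolume_eq_lintegral hP hψ hν hu he q hS hSe (hSe.trans hq)]
  refine le_antisymm ?_ (Measure.le_iff'.1 hge S)
  refine (Measure.le_iff'.1 hle2 S).trans ?_
  rw [Measure.add_apply, Measure.restrict_apply hS, Measure.restrict_apply hS,
    inter_eq_self_of_subset_left hSe]
  have : S ∩ e.sourceᶜ = ∅ := by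
    rw [← sdiff_eq, sdiff_eq_empty]; exact hSe
  simp [this]

variable (m) in
/-- The measure `u dvol`, where `u = ⟨b, ν⟩`: it reads as the Lebesgue measure in graph charts. -/
def graphMeasure (b : EuclideanSpace ℝ (Fin (m + 1))) (ν : M → EuclideanSpace ℝ (Fin (m + 1))) :
    Measure M :=
  (riemannianVolume m M).withDensity fun x => ENNReal.ofReal ⟪b, ν x⟫

theorem graphMeasure_map_restrict (hP : IsHorizontalProj b P) (hψ : IsIsometricImmersion ψ)
    (hν : IsGaussMap ψ ν) (hu : ∀ x, 0 < ⟪b, ν x⟫) (he : IsGraphChart P ψ e) :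
    ((graphMeasure m b ν).restrict e.source).map (fun x => P (ψ x))
      = volume.restrict e.target := by
  have hes : MeasurableSet e.source := e.open_source.measurableSet
  have het : MeasurableSet e.target := e.open_target.measurableSet
  have hΦ : Measurable (fun x => P (ψ x)) :=
    (P.continuous.comp hψ.contMDiff.continuous).measurable
  have himg : ∀ T : Set (EuclideanSpace ℝ (Fin m)),
      (fun x => P (ψ x)) '' ((fun x => P (ψ x)) ⁻¹' T ∩ e.source) = T ∩ e.target := by
    intro T
    ext z
    constructor
    · rintro ⟨x, hx, rfl⟩
      exact ⟨hx.1, he.proj_mem_target hx.2⟩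
    · rintro ⟨hz, hze⟩
      refine ⟨e.symm z, ⟨?_, e.map_target hze⟩, he.proj_symm hze⟩
      rw [mem_preimage, he.proj_symm hze]
      exact hz
  have hcont : ContinuousOn (fun y => ⟪b, ν (e.symm y)⟫) e.target :=
    continuousOn_const.inner (hν.contMDiff.continuous.comp_continuousOn e.continuousOn_symm)
  have hcont' : ContinuousOn (fun y => 1 / ⟪b, ν (e.symm y)⟫) e.target :=
    continuousOn_const.div hcont fun y _ => (hu _).ne'
  have hmap : ((riemannianVolume m M).restrict e.source).map (fun x => P (ψ x))
      = (volume.restrict e.target).withDensity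
        (fun y => ENNReal.ofReal (1 / ⟪b, ν (e.symm y)⟫)) := by
    ext T hT
    rw [Measure.map_apply hΦ hT, Measure.restrict_apply (hΦ hT),
      riemannianVolume_eq_lintegral hP hψ hν hu he ((hΦ hT).inter hes) inter_subset_right,
      himg, withDensity_apply _ hT, Measure.restrict_restrict hT]
  have hmeas : AEMeasurable (fun y => ENNReal.ofReal ⟪b, ν (e.symm y)⟫)
      (volume.restrict e.target) :=
    (hcont.aemeasurable het).ennreal_ofReal
  have hmeas' : AEMeasurable (fun y => ENNReal.ofReal (1 / ⟪b, ν (e.symm y)⟫))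
      (volume.restrict e.target) :=
    (hcont'.aemeasurable het).ennreal_ofReal
  have h1 : (graphMeasure m b ν).restrict e.source
      = ((riemannianVolume m M).restrict e.source).withDensity
        (fun x => ENNReal.ofReal ⟪b, ν (e.symm (P (ψ x)))⟫) := by
    rw [graphMeasure, restrict_withDensity hes]
    refine withDensity_congr_ae ?_
    filter_upwards [ae_restrict_mem hes] with x hx
    rw [he.symm_proj hx]
  ext T hT
  rw [Measure.map_apply hΦ hT, h1, withDensity_apply _ (hΦ hT)]
  have h2 : AEMeasurable (fun y => ENNReal.ofReal ⟪b, ν (e.symm y)⟫)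
      ((((riemannianVolume m M).restrict e.source).map (fun x => P (ψ x))).restrict T) := by
    rw [hmap]
    exact (hmeas.mono_ac (withDensity_absolutelyContinuous _ _)).restrict
  rw [Measure.restrict_map hΦ hT] at h2
  have h3 := lintegral_map' h2 hΦ.aemeasurable
  rw [← h3, ← Measure.restrict_map hΦ hT, hmap, restrict_withDensity hT,
    lintegral_withDensity_eq_lintegral_mul₀ hmeas'.restrict hmeas.restrict]
  have h4 : ∀ y, ((fun y => ENNReal.ofReal (1 / ⟪b, ν (e.symm y)⟫)) *
      fun y => ENNReal.ofReal ⟪b, ν (e.symm y)⟫) y = 1 := by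
    intro y
    rw [Pi.mul_apply, ← ENNReal.ofReal_mul (by have := hu (e.symm y); positivity),
      one_div_mul_cancel (hu _).ne', ENNReal.ofReal_one]
  simp only [h4]
  rw [setLIntegral_one]

end Volume

section LocallyLipschitz

theorem locallyLipschitzOn_of_contDiffOn {E F : Type*} [NormedAddCommGroup E]
    [NormedSpace ℝ E] [NormedAddCommGroup F] [NormedSpace ℝ F] {f : E → F} {U : Set E}
    (hU : IsOpen U) (hf : ContDiffOn ℝ 1 f U) : LocallyLipschitzOn U f := by
  intro x hx
  obtain ⟨K, t, ht, hK⟩ := (hf.contDiffAt (hU.mem_nhds hx)).exists_lipschitzOnWith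
  exact ⟨K, t, mem_nhdsWithin_of_mem_nhds ht, hK⟩

theorem locallyLipschitzOn_mul {X : Type*} [PseudoEMetricSpace X] {f g : X → ℝ} {s : Set X}
    (hf : LocallyLipschitzOn s f) (hg : LocallyLipschitzOn s g) :
    LocallyLipschitzOn s (fun x => f x * g x) := by
  intro x hx
  obtain ⟨K, t, ht, hK⟩ := hf hx
  obtain ⟨K', t', ht', hK'⟩ := hg hx
  have hm : ContDiff ℝ 1 (fun p : ℝ × ℝ => p.1 * p.2) := by fun_prop
  obtain ⟨D, r, hr, hD⟩ := hm.locallyLipschitz (f x, g x)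
  have hc : ContinuousWithinAt (fun z => (f z, g z)) s x :=
    (hf.continuousOn x hx).prodMk (hg.continuousOn x hx)
  refine ⟨D * max K K', t ∩ t' ∩ (fun z => (f z, g z)) ⁻¹' r,
    inter_mem (inter_mem ht ht') (hc hr), ?_⟩
  have h1 : LipschitzOnWith (max K K') (fun z => (f z, g z))
      (t ∩ t' ∩ (fun z => (f z, g z)) ⁻¹' r) :=
    (hK.mono (inter_subset_left.trans inter_subset_left)).prodMk
      (hK'.mono (inter_subset_left.trans inter_subset_right))
  exact hD.comp h1 fun z hz => hz.2

/-- A locally Lipschitz function with compact support is Lipschitz. -/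
theorem exists_lipschitzWith_of_hasCompactSupport {E : Type*}
    [NormedAddCommGroup E] [NormedSpace ℝ E] [FiniteDimensional ℝ E] {g : E → ℝ}
    (hg : LocallyLipschitz g) (hc : HasCompactSupport g) : ∃ C : ℝ≥0, LipschitzWith C g := by
  have : ProperSpace E := FiniteDimensional.proper_real E
  obtain ⟨r, hr⟩ := hc.isBounded.subset_closedBall 0
  obtain ⟨K, hK⟩ := (hg.locallyLipschitzOn (s := closedBall 0 (r + 1))
    ).exists_lipschitzOnWith_of_compact (isCompact_closedBall 0 (r + 1))
  obtain ⟨B, hB⟩ := hg.continuous.bounded_above_of_compact_support hc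
  have hB0 : 0 ≤ B := (norm_nonneg _).trans (hB 0)
  have hout : ∀ x, x ∉ closedBall (0 : E) (r + 1) → g x = 0 := by
    intro x hx
    refine image_eq_zero_of_notMem_tsupport fun h => hx ?_
    exact closedBall_subset_closedBall (by linarith) (hr h)
  have key : ∀ x y, x ∈ closedBall (0 : E) (r + 1) → y ∉ closedBall (0 : E) (r + 1) →
      dist (g x) (g y) ≤ B * dist x y := by
    intro x y _ hy
    rw [hout y hy, dist_zero_right]
    by_cases hx : x ∈ tsupport g
    · have h1 : dist x 0 ≤ r := hr hx
      have h2 : r + 1 < dist y 0 := not_le.1 hy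
      have h3 : 1 ≤ dist x y := by
        have := dist_triangle y x 0
        rw [dist_comm y x] at this
        linarith
      calc ‖g x‖ ≤ B := hB x
        _ ≤ B * dist x y := le_mul_of_one_le_right hB0 h3
    · rw [image_eq_zero_of_notMem_tsupport hx, norm_zero]
      positivity
  refine ⟨max K ⟨B, hB0⟩, LipschitzWith.of_dist_le_mul fun x y => ?_⟩
  have hle1 : (K : ℝ) ≤ ((max K ⟨B, hB0⟩ : ℝ≥0) : ℝ) := by exact_mod_cast le_max_left _ _
  have hle2 : B ≤ ((max K ⟨B, hB0⟩ : ℝ≥0) : ℝ) :=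
    NNReal.coe_le_coe.2 (le_max_right K ⟨B, hB0⟩)
  by_cases hx : x ∈ closedBall (0 : E) (r + 1) <;> by_cases hy : y ∈ closedBall (0 : E) (r + 1)
  · exact (hK.dist_le_mul x hx y hy).trans (mul_le_mul_of_nonneg_right hle1 dist_nonneg)
  · exact (key x y hx hy).trans (mul_le_mul_of_nonneg_right hle2 dist_nonneg)
  · rw [dist_comm, dist_comm x]
    exact (key y x hy hx).trans (mul_le_mul_of_nonneg_right hle2 dist_nonneg)
  · rw [hout x hx, hout y hy, dist_self]
    positivity

end LocallyLipschitz

section ChartDeriv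

variable {m : ℕ} {M : Type*} [MetricSpace M] [ChartedSpace (EuclideanSpace ℝ (Fin m)) M]
  {b : EuclideanSpace ℝ (Fin (m + 1))}
  {P : EuclideanSpace ℝ (Fin (m + 1)) →L[ℝ] EuclideanSpace ℝ (Fin m)}
  {ψ ν : M → EuclideanSpace ℝ (Fin (m + 1))}
  {e : OpenPartialHomeomorph M (EuclideanSpace ℝ (Fin m))}
  {W : Type*} [NormedAddCommGroup W] [NormedSpace ℝ W]

open Classical in
/-- The derivative of a function on `M` in graph coordinates. -/
def chartDeriv (P : EuclideanSpace ℝ (Fin (m + 1)) →L[ℝ] EuclideanSpace ℝ (Fin m))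
    (ψ : M → EuclideanSpace ℝ (Fin (m + 1))) (f : M → W) (x : M) :
    EuclideanSpace ℝ (Fin m) →L[ℝ] W :=
  if h : ∃ e : OpenPartialHomeomorph M (EuclideanSpace ℝ (Fin m)),
      IsGraphChart P ψ e ∧ x ∈ e.source then
    fderiv ℝ (fun y => f (h.choose.symm y)) (P (ψ x))
  else 0

theorem chartDeriv_eq (he : IsGraphChart P ψ e) {x : M} (hx : x ∈ e.source) (f : M → W) :
    chartDeriv P ψ f x = fderiv ℝ (fun y => f (e.symm y)) (P (ψ x)) := by
  have h : ∃ e : OpenPartialHomeomorph M (EuclideanSpace ℝ (Fin m)),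
      IsGraphChart P ψ e ∧ x ∈ e.source := ⟨e, he, hx⟩
  rw [chartDeriv, dif_pos h]
  refine Filter.EventuallyEq.fderiv_eq ?_
  filter_upwards [h.choose_spec.1.symm_eventuallyEq he h.choose_spec.2 hx] with y hy
  rw [hy]

theorem chartDeriv_eq_zero_of_notMem_tsupport {f : M → W} {x : M} (hx : x ∉ tsupport f) :
    chartDeriv P ψ f x = 0 := by
  by_cases h : ∃ e : OpenPartialHomeomorph M (EuclideanSpace ℝ (Fin m)),
      IsGraphChart P ψ e ∧ x ∈ e.source
  · obtain ⟨e, he, hxe⟩ := h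
    rw [chartDeriv_eq he hxe]
    have h1 : (fun y => f (e.symm y)) =ᶠ[𝓝 (P (ψ x))] fun _ => 0 := by
      have hc : ContinuousAt e.symm (P (ψ x)) := e.continuousAt_symm (he.proj_mem_target hxe)
      have h2 : ∀ᶠ y in 𝓝 (P (ψ x)), e.symm y ∈ (tsupport f)ᶜ := by
        refine hc.eventually_mem ((isClosed_tsupport f).isOpen_compl.mem_nhds ?_)
        rwa [he.symm_proj hxe]
      filter_upwards [h2] with y hy using image_eq_zero_of_notMem_tsupport hy
    rw [h1.fderiv_eq]
    simp
  · rw [chartDeriv, dif_neg h]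

/-- The field `u⁻¹ ∇u` in graph coordinates, as a function on `M`. -/
def gradFieldOn (P : EuclideanSpace ℝ (Fin (m + 1)) →L[ℝ] EuclideanSpace ℝ (Fin m))
    (ψ ν : M → EuclideanSpace ℝ (Fin (m + 1))) (x : M) : EuclideanSpace ℝ (Fin m) :=
  -P (chartDeriv P ψ ν x (P (ν x)))

theorem gradFieldOn_eq (he : IsGraphChart P ψ e) {x : M} (hx : x ∈ e.source) :
    gradFieldOn P ψ ν x = gradField P (fun y => ν (e.symm y)) (P (ψ x)) := by
  rw [gradFieldOn, gradField, chartDeriv_eq he hx, he.symm_proj hx]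

/-- Functions which are locally Lipschitz in all graph charts. -/
def IsChartLipschitz (P : EuclideanSpace ℝ (Fin (m + 1)) →L[ℝ] EuclideanSpace ℝ (Fin m))
    (ψ : M → EuclideanSpace ℝ (Fin (m + 1))) (f : M → ℝ) : Prop :=
  ∀ e : OpenPartialHomeomorph M (EuclideanSpace ℝ (Fin m)), IsGraphChart P ψ e →
    LocallyLipschitzOn e.target (fun y => f (e.symm y))

theorem IsChartLipschitz.mul {f g : M → ℝ} (hf : IsChartLipschitz P ψ f)
    (hg : IsChartLipschitz P ψ g) : IsChartLipschitz P ψ (fun x => f x * g x) :=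
  fun e he => locallyLipschitzOn_mul (hf e he) (hg e he)

theorem isChartLipschitz_of_contMDiff {f : M → ℝ} (hf : ContMDiff (𝓡 m) 𝓘(ℝ, ℝ) ∞ f) :
    IsChartLipschitz P ψ f := fun e he =>
  locallyLipschitzOn_of_contDiffOn e.open_target
    ((he.contDiffOn_comp_symm hf).of_le (by exact_mod_cast le_top))

/-- A test function supported in a graph chart is Lipschitz in this chart. -/
theorem exists_lipschitzWith_indicator (he : IsGraphChart P ψ e) {ζ : M → ℝ}
    (hζ : IsChartLipschitz P ψ ζ) (hc : HasCompactSupport ζ) (hsub : tsupport ζ ⊆ e.source) :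
    (∃ C : ℝ≥0, LipschitzWith C (e.target.indicator fun y => ζ (e.symm y))) ∧
    HasCompactSupport (e.target.indicator fun y => ζ (e.symm y)) ∧
    tsupport (e.target.indicator fun y => ζ (e.symm y)) ⊆ e.target := by
  set g := e.target.indicator fun y => ζ (e.symm y) with hg
  have hK : IsCompact (e '' tsupport ζ) := hc.isCompact.image_of_continuousOn
    (e.continuousOn.mono hsub)
  have hKt : e '' tsupport ζ ⊆ e.target := by
    rintro _ ⟨x, hx, rfl⟩
    exact e.map_source (hsub hx)
  have hg0 : ∀ y, y ∉ e '' tsupport ζ → g y = 0 := by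
    intro y hy
    by_cases hyt : y ∈ e.target
    · rw [hg, indicator_of_mem hyt]
      refine image_eq_zero_of_notMem_tsupport fun h => hy ⟨_, h, e.right_inv hyt⟩
    · exact indicator_of_notMem hyt _
  have hgc : HasCompactSupport g := HasCompactSupport.intro hK hg0
  refine ⟨exists_lipschitzWith_of_hasCompactSupport ?_ hgc, hgc, ?_⟩
  · intro y
    by_cases hyt : y ∈ e.target
    · obtain ⟨K, t, ht, hLip⟩ := hζ e he hyt
      rw [e.open_target.nhdsWithin_eq hyt] at ht
      refine ⟨K, t ∩ e.target, inter_mem ht (e.open_target.mem_nhds hyt), ?_⟩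
      intro z hz z' hz'
      rw [hg, indicator_of_mem hz.2, indicator_of_mem hz'.2]
      exact hLip hz.1 hz'.1
    · refine ⟨0, (e '' tsupport ζ)ᶜ, hK.isClosed.isOpen_compl.mem_nhds fun h => hyt (hKt h), ?_⟩
      intro z hz z' hz'
      rw [hg0 z hz, hg0 z' hz', edist_self]
      exact zero_le
  · refine (closure_minimal ?_ hK.isClosed).trans hKt
    intro y hy
    by_contra h
    exact hy (hg0 y h)

end ChartDeriv

section Weak

variable {m : ℕ} {M : Type*} [MetricSpace M] [ChartedSpace (EuclideanSpace ℝ (Fin m)) M]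
  [RiemannianBundle (fun x : M => TangentSpace (𝓡 m) x)] [IsManifold (𝓡 m) ∞ M]
  [MeasurableSpace M] [BorelSpace M]
  {b : EuclideanSpace ℝ (Fin (m + 1))}
  {P : EuclideanSpace ℝ (Fin (m + 1)) →L[ℝ] EuclideanSpace ℝ (Fin m)}
  {ψ ν : M → EuclideanSpace ℝ (Fin (m + 1))}
  {e : OpenPartialHomeomorph M (EuclideanSpace ℝ (Fin m))}

/-- Integration in a graph chart. -/
theorem integral_graphMeasure_eq (hP : IsHorizontalProj b P) (hψ : IsIsometricImmersion ψ)
    (hν : IsGaussMap ψ ν) (hu : ∀ x, 0 < ⟪b, ν x⟫) (he : IsGraphChart P ψ e) {k : M → ℝ}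
    {κ : EuclideanSpace ℝ (Fin m) → ℝ} (hk : ∀ x, x ∉ e.source → k x = 0)
    (hκ : ∀ x ∈ e.source, k x = κ (P (ψ x))) (hκ0 : ∀ y, y ∉ e.target → κ y = 0)
    (hi : Integrable κ) :
    Integrable k (graphMeasure m b ν) ∧ ∫ x, k x ∂(graphMeasure m b ν) = ∫ y, κ y := by
  have hes : MeasurableSet e.source := e.open_source.measurableSet
  have hΦ : AEMeasurable (fun x => P (ψ x)) ((graphMeasure m b ν).restrict e.source) :=
    (P.continuous.comp hψ.contMDiff.continuous).aemeasurable
  have hmap := graphMeasure_map_restrict hP hψ hν hu he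
  have hi' : Integrable κ (((graphMeasure m b ν).restrict e.source).map (fun x => P (ψ x))) := by
    rw [hmap]; exact hi.restrict
  have hae : (fun x => κ (P (ψ x))) =ᵐ[(graphMeasure m b ν).restrict e.source] k := by
    filter_upwards [ae_restrict_mem hes] with x hx using (hκ x hx).symm
  constructor
  · have h1 : IntegrableOn k e.source (graphMeasure m b ν) :=
      ((integrable_map_measure hi'.aestronglyMeasurable hΦ).1 hi').congr hae
    exact (integrableOn_iff_integrable_of_support_subset fun x hx => by
      by_contra h; exact hx (hk x h)).1 h1
  · rw [← setIntegral_eq_integral_of_forall_compl_eq_zero hk, ← integral_congr_ae hae,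
      ← setIntegral_eq_integral_of_forall_compl_eq_zero hκ0, ← hmap,
      integral_map hΦ hi'.aestronglyMeasurable]

/-- The equation `Δ_w u = -|A|² u` tested against a function supported in a graph chart. -/
theorem weak_equation_of_tsupport_subset (hP : IsHorizontalProj b P)
    (hψ : IsIsometricImmersion ψ) (hν : IsGaussMap ψ ν) (hu : ∀ x, 0 < ⟪b, ν x⟫) {c : ℝ}
    (hsol : IsSoliton ψ ν c) (he : IsGraphChart P ψ e) {ζ : M → ℝ} (hζ : IsChartLipschitz P ψ ζ)
    (hc : HasCompactSupport ζ) (hsub : tsupport ζ ⊆ e.source) :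
    Integrable (fun x => chartDeriv P ψ ζ x (gradFieldOn P ψ ν x) *
      Real.exp (c * (‖ψ x‖ ^ 2 / 2))) (graphMeasure m b ν) ∧
    Integrable (fun x => ζ x * (Real.exp (c * (‖ψ x‖ ^ 2 / 2)) * normA ψ ν x ^ 2))
      (graphMeasure m b ν) ∧
    ∫ x, chartDeriv P ψ ζ x (gradFieldOn P ψ ν x) * Real.exp (c * (‖ψ x‖ ^ 2 / 2))
      ∂(graphMeasure m b ν)
      = ∫ x, ζ x * (Real.exp (c * (‖ψ x‖ ^ 2 / 2)) * normA ψ ν x ^ 2) ∂(graphMeasure m b ν) := by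
  obtain ⟨⟨C, hLip⟩, hgc, hgt⟩ := exists_lipschitzWith_indicator he hζ hc hsub
  set g := e.target.indicator fun y => ζ (e.symm y) with hg
  have hgp := he.isGraphParam hψ.contMDiff hν hu
  have hX : ContDiffOn ℝ 1 (fun z => Real.exp (c * (‖ψ (e.symm z)‖ ^ 2 / 2)) •
      gradField P (fun y => ν (e.symm y)) z) e.target := by
    have h1 : ContDiffOn ℝ ∞ (fun z => Real.exp (c * (‖ψ (e.symm z)‖ ^ 2 / 2))) e.target :=
      (contDiffOn_const.mul ((hgp.contDiffOn.norm_sq ℝ).div_const 2)).exp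
    exact (h1.smul hgp.contDiffOn_gradField).of_le (by exact_mod_cast le_top)
  obtain ⟨i1, i2, heq⟩ := integral_fderiv_apply_eq_neg e.open_target hX hLip hgc hgt
  have t1 := integral_graphMeasure_eq hP hψ hν hu he
    (k := fun x => chartDeriv P ψ ζ x (gradFieldOn P ψ ν x) * Real.exp (c * (‖ψ x‖ ^ 2 / 2)))
    (fun x hx => by
      simp [chartDeriv_eq_zero_of_notMem_tsupport (P := P) (ψ := ψ) fun h => hx (hsub h)])
    (fun x hx => by
      have h1 : (fun y => ζ (e.symm y)) =ᶠ[𝓝 (P (ψ x))] g := by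
        filter_upwards [e.open_target.mem_nhds (he.proj_mem_target hx)] with y hy
        rw [hg, indicator_of_mem hy]
      rw [chartDeriv_eq he hx, gradFieldOn_eq he hx, h1.fderiv_eq, map_smul, he.symm_proj hx,
        smul_eq_mul, mul_comm])
    (fun y hy => by
      have h1 : fderiv ℝ g y = 0 := image_eq_zero_of_notMem_tsupport
        fun h => hy (hgt (tsupport_fderiv_subset ℝ h))
      simp [h1]) i1
  have t2 := integral_graphMeasure_eq hP hψ hν hu he
    (k := fun x => ζ x * (Real.exp (c * (‖ψ x‖ ^ 2 / 2)) * normA ψ ν x ^ 2))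
    (fun x hx => by
      simp [image_eq_zero_of_notMem_tsupport fun h => hx (hsub h)])
    (fun x hx => by
      have hy := he.proj_mem_target hx
      rw [Pi.neg_apply, hgp.trace_fderiv_weighted_gradField hP (fun y hy =>
          trace_proj_fderiv_normal_eq hP hψ hν hu he hsol hy) hy,
        trace_proj_fderiv_normal_sq_eq hP hψ hν hu he hy, he.symm_proj hx, hg,
        indicator_of_mem hy, he.symm_proj hx, mul_neg, neg_neg])
    (fun y hy => by simp [hg, hy]) i2.neg
  refine ⟨t1.1, t2.1, ?_⟩
  rw [t1.2, t2.2, heq]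
  exact (integral_neg _).symm

end Weak

section Global

variable {m : ℕ} {M : Type*} [MetricSpace M] [ChartedSpace (EuclideanSpace ℝ (Fin m)) M]
  [RiemannianBundle (fun x : M => TangentSpace (𝓡 m) x)] [IsManifold (𝓡 m) ∞ M]
  [MeasurableSpace M] [BorelSpace M]
  {b : EuclideanSpace ℝ (Fin (m + 1))}
  {P : EuclideanSpace ℝ (Fin (m + 1)) →L[ℝ] EuclideanSpace ℝ (Fin m)}
  {ψ ν : M → EuclideanSpace ℝ (Fin (m + 1))}
  {e : OpenPartialHomeomorph M (EuclideanSpace ℝ (Fin m))}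

/-- The measure of the points of a graph chart with coordinates in a given set. -/
theorem graphMeasure_inter_preimage (hP : IsHorizontalProj b P) (hψ : IsIsometricImmersion ψ)
    (hν : IsGaussMap ψ ν) (hu : ∀ x, 0 < ⟪b, ν x⟫) (he : IsGraphChart P ψ e)
    {T : Set (EuclideanSpace ℝ (Fin m))} (hT : MeasurableSet T) :
    graphMeasure m b ν ((fun x => P (ψ x)) ⁻¹' T ∩ e.source) = volume (T ∩ e.target) := by
  have hΦ : Measurable (fun x => P (ψ x)) :=
    (P.continuous.comp hψ.contMDiff.continuous).measurable
  have h := congrArg (fun μ => μ T) (graphMeasure_map_restrict hP hψ hν hu he)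
  simp only [Measure.map_apply hΦ hT, Measure.restrict_apply hT,
    Measure.restrict_apply (hΦ hT)] at h
  exact h

theorem isLocallyFiniteMeasure_graphMeasure (hP : IsHorizontalProj b P)
    (hψ : IsIsometricImmersion ψ) (hν : IsGaussMap ψ ν) (hu : ∀ x, 0 < ⟪b, ν x⟫) :
    IsLocallyFiniteMeasure (graphMeasure m b ν) := by
  refine ⟨fun x => ?_⟩
  obtain ⟨e, he, hx⟩ := exists_isGraphChart hP hψ hν hu x
  have hΦ : Continuous (fun x => P (ψ x)) := P.continuous.comp hψ.contMDiff.continuous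
  refine ⟨(fun x => P (ψ x)) ⁻¹' ball (P (ψ x)) 1 ∩ e.source,
    inter_mem (hΦ.continuousAt.preimage_mem_nhds (ball_mem_nhds _ one_pos))
      (e.open_source.mem_nhds hx), ?_⟩
  rw [graphMeasure_inter_preimage hP hψ hν hu he measurableSet_ball]
  exact (measure_mono inter_subset_left).trans_lt measure_ball_lt_top

theorem isOpenPosMeasure_graphMeasure (hP : IsHorizontalProj b P)
    (hψ : IsIsometricImmersion ψ) (hν : IsGaussMap ψ ν) (hu : ∀ x, 0 < ⟪b, ν x⟫) :
    (graphMeasure m b ν).IsOpenPosMeasure := by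
  refine ⟨fun U hU hne h0 => ?_⟩
  obtain ⟨x, hx⟩ := hne
  obtain ⟨e, he, hxe⟩ := exists_isGraphChart hP hψ hν hu x
  have hV : IsOpen (e.target ∩ e.symm ⁻¹' U) := e.isOpen_inter_preimage_symm hU
  have h1 := graphMeasure_inter_preimage hP hψ hν hu he hV.measurableSet
  have h2 : (fun x => P (ψ x)) ⁻¹' (e.target ∩ e.symm ⁻¹' U) ∩ e.source ⊆ U := by
    rintro z ⟨⟨_, hz⟩, hze⟩
    rw [mem_preimage, he.symm_proj hze] at hz
    exact hz
  rw [measure_mono_null h2 h0] at h1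
  refine (hV.inter e.open_target).measure_ne_zero volume ?_ h1.symm
  refine ⟨P (ψ x), ⟨he.proj_mem_target hxe, ?_⟩, he.proj_mem_target hxe⟩
  rw [mem_preimage, he.symm_proj hxe]
  exact hx

/-- Rademacher's theorem in graph charts. -/
theorem ae_differentiableAt_of_isChartLipschitz [SecondCountableTopology M]
    (hP : IsHorizontalProj b P)
    (hψ : IsIsometricImmersion ψ) (hν : IsGaussMap ψ ν) (hu : ∀ x, 0 < ⟪b, ν x⟫) {ζ : M → ℝ}
    (hζ : IsChartLipschitz P ψ ζ) :
    ∀ᵐ x ∂(graphMeasure m b ν), ∀ e : OpenPartialHomeomorph M (EuclideanSpace ℝ (Fin m)),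
      IsGraphChart P ψ e → x ∈ e.source →
        DifferentiableAt ℝ (fun y => ζ (e.symm y)) (P (ψ x)) := by
  rw [ae_iff]
  refine measure_null_of_locally_null _ fun x _ => ?_
  obtain ⟨e, he, hx⟩ := exists_isGraphChart hP hψ hν hu x
  have hxt := he.proj_mem_target hx
  obtain ⟨K, t, ht, hLip⟩ := hζ e he hxt
  rw [e.open_target.nhdsWithin_eq hxt] at ht
  obtain ⟨U, hUt, hUo, hxU⟩ := _root_.mem_nhds_iff.1 ht
  have hΦ : Continuous (fun x => P (ψ x)) := P.continuous.comp hψ.contMDiff.continuous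
  refine ⟨_, inter_mem_nhdsWithin _ (inter_mem
    (hΦ.continuousAt.preimage_mem_nhds (hUo.mem_nhds hxU)) (e.open_source.mem_nhds hx)), ?_⟩
  have hnull : volume {y | y ∈ U ∧ ¬ DifferentiableAt ℝ (fun y => ζ (e.symm y)) y} = 0 := by
    have h1 := (hLip.mono hUt).ae_differentiableWithinAt_of_mem (μ := volume)
    rw [ae_iff] at h1
    refine measure_mono_null ?_ h1
    rintro y ⟨hy, hyd⟩ h2
    exact hyd ((h2 hy).differentiableAt (hUo.mem_nhds hy))
  obtain ⟨T, hT, hTm, hT0⟩ := exists_measurable_superset_of_null hnull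
  have h2 := graphMeasure_inter_preimage hP hψ hν hu he hTm
  rw [measure_mono_null inter_subset_left hT0] at h2
  refine measure_mono_null ?_ h2
  rintro z ⟨hz, hzU, hze⟩
  refine ⟨hT ⟨hzU, fun hd => hz fun e' he' hze' => ?_⟩, hze⟩
  refine hd.congr_of_eventuallyEq ?_
  filter_upwards [he'.symm_eventuallyEq he hze' hze] with y hy
  rw [hy]

/-- The equation `Δ_w u = -|A|² u` tested against compactly supported Lipschitz functions. -/
theorem weak_equation [SecondCountableTopology M] [SigmaCompactSpace M] (hP : IsHorizontalProj b P)
    (hψ : IsIsometricImmersion ψ) (hν : IsGaussMap ψ ν) (hu : ∀ x, 0 < ⟪b, ν x⟫) {c : ℝ}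
    (hsol : IsSoliton ψ ν c) {ζ : M → ℝ} (hζ : IsChartLipschitz P ψ ζ)
    (hc : HasCompactSupport ζ) :
    Integrable (fun x => chartDeriv P ψ ζ x (gradFieldOn P ψ ν x) *
      Real.exp (c * (‖ψ x‖ ^ 2 / 2))) (graphMeasure m b ν) ∧
    Integrable (fun x => ζ x * (Real.exp (c * (‖ψ x‖ ^ 2 / 2)) * normA ψ ν x ^ 2))
      (graphMeasure m b ν) ∧
    ∫ x, chartDeriv P ψ ζ x (gradFieldOn P ψ ν x) * Real.exp (c * (‖ψ x‖ ^ 2 / 2))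
      ∂(graphMeasure m b ν)
      = ∫ x, ζ x * (Real.exp (c * (‖ψ x‖ ^ 2 / 2)) * normA ψ ν x ^ 2) ∂(graphMeasure m b ν) := by
  choose E hE hxE using exists_isGraphChart hP hψ hν hu
  obtain ⟨f, hf⟩ := SmoothPartitionOfUnity.exists_isSubordinate (𝓡 m) isClosed_univ
    (fun x => (E x).source) (fun x => (E x).open_source)
    (fun x _ => mem_iUnion.2 ⟨x, hxE x⟩)
  have hfin := f.locallyFinite.finite_nonempty_inter_compact hc.isCompact
  set s := hfin.toFinset with hs
  have hsum : ∀ x, ζ x = ∑ i ∈ s, f i x * ζ x := by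
    intro x
    by_cases hx : x ∈ tsupport ζ
    · have h1 : ∑ i ∈ s, f i x = 1 := by
        rw [← f.sum_eq_one (mem_univ x)]
        refine (finsum_eq_sum_of_support_subset _ fun i hi => ?_).symm
        simp only [hs, Finite.coe_toFinset]
        exact ⟨x, hi, hx⟩
      rw [← Finset.sum_mul, h1, one_mul]
    · simp [image_eq_zero_of_notMem_tsupport hx]
  have hζi : ∀ i, IsChartLipschitz P ψ (fun x => f i x * ζ x) := fun i =>
    (isChartLipschitz_of_contMDiff (f i).contMDiff).mul hζ
  have hw : ∀ i, _ := fun i => weak_equation_of_tsupport_subset hP hψ hν hu hsol (hE i) (hζi i)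
    hc.mul_left ((tsupport_mul_subset_left).trans (hf i))
  have hD : ∀ᵐ x ∂(graphMeasure m b ν), chartDeriv P ψ ζ x (gradFieldOn P ψ ν x) *
      Real.exp (c * (‖ψ x‖ ^ 2 / 2)) = ∑ i ∈ s, chartDeriv P ψ (fun x => f i x * ζ x) x
        (gradFieldOn P ψ ν x) * Real.exp (c * (‖ψ x‖ ^ 2 / 2)) := by
    filter_upwards [ae_differentiableAt_of_isChartLipschitz hP hψ hν hu hζ] with x hx
    have hd := hx (E x) (hE x) (hxE x)
    have hfd : ∀ i, DifferentiableAt ℝ (fun y => f i ((E x).symm y)) (P (ψ x)) := fun i =>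
      (((hE x).contDiffOn_comp_symm (f i).contMDiff).contDiffAt
        ((E x).open_target.mem_nhds ((hE x).proj_mem_target (hxE x)))).differentiableAt (by simp)
    have h1 : chartDeriv P ψ ζ x = ∑ i ∈ s, chartDeriv P ψ (fun x => f i x * ζ x) x := by
      simp only [chartDeriv_eq (hE x) (hxE x)]
      rw [← fderiv_fun_sum fun i _ => (hfd i).fun_mul hd]
      congr 1
      funext y
      exact hsum _
    rw [h1, sum_apply, Finset.sum_mul]
  have hR : (fun x => ζ x * (Real.exp (c * (‖ψ x‖ ^ 2 / 2)) * normA ψ ν x ^ 2))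
      = fun x => ∑ i ∈ s, f i x * ζ x *
        (Real.exp (c * (‖ψ x‖ ^ 2 / 2)) * normA ψ ν x ^ 2) := by
    funext x
    rw [← Finset.sum_mul, ← hsum x]
  refine ⟨(integrable_finsetSum s fun i _ => (hw i).1).congr (EventuallyEq.symm hD), ?_, ?_⟩
  · rw [hR]
    exact integrable_finsetSum s fun i _ => (hw i).2.1
  · rw [integral_congr_ae hD, hR, integral_finsetSum s fun i _ => (hw i).1,
      integral_finsetSum s fun i _ => (hw i).2.1]
    exact Finset.sum_congr rfl fun i _ => (hw i).2.2

end Global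

section Gradient

variable {m : ℕ} {M : Type*} [MetricSpace M] [ChartedSpace (EuclideanSpace ℝ (Fin m)) M]
  [RiemannianBundle (fun x : M => TangentSpace (𝓡 m) x)] [IsRiemannianManifold (𝓡 m) M]
  {P : EuclideanSpace ℝ (Fin (m + 1)) →L[ℝ] EuclideanSpace ℝ (Fin m)}
  {ψ : M → EuclideanSpace ℝ (Fin (m + 1))}
  {e : OpenPartialHomeomorph M (EuclideanSpace ℝ (Fin m))}

theorem isChartLipschitz_of_lipschitzWith (hψ : IsIsometricImmersion ψ) {φ : M → ℝ} {L : ℝ≥0}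
    (hφ : LipschitzWith L φ) : IsChartLipschitz P ψ φ := by
  intro e he y hy
  have hF : ContDiffAt ℝ ∞ (fun y => ψ (e.symm y)) y :=
    (he.contDiffOn_comp_symm hψ.contMDiff).contDiffAt (e.open_target.mem_nhds hy)
  have hcont : ContinuousAt (fderiv ℝ (fun y => ψ (e.symm y))) y :=
    (hF.fderiv_right (m := ∞) (by simp)).continuousAt
  set C : ℝ≥0 := ‖fderiv ℝ (fun y => ψ (e.symm y)) y‖₊ + 1 with hC
  have hev : ∀ᶠ z in 𝓝 y, ‖fderiv ℝ (fun y => ψ (e.symm y)) z‖ < C ∧ z ∈ e.target := by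
    refine (hcont.norm.eventually_lt_const ?_).and (e.open_target.mem_nhds hy)
    simp [hC]
  obtain ⟨r, hr, hball⟩ := Metric.eventually_nhds_iff_ball.1 hev
  refine ⟨L * C, ball y r, mem_nhdsWithin_of_mem_nhds (ball_mem_nhds y hr), ?_⟩
  refine hφ.comp_lipschitzOnWith (LipschitzOnWith.of_dist_le_mul fun z hz z' hz' => ?_)
  have hseg : ∀ t ∈ Icc (0 : ℝ) 1, z + t • (z' - z) ∈ ball y r := fun t ht =>
    (convex_ball y r).add_smul_sub_mem hz hz' ht
  have h1 := dist_symm_le he hψ (y := z) (v := z' - z) (C := C * dist z z')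
    (fun t ht => (hball _ (hseg t ht)).2) (fun t ht => by
      refine (ContinuousLinearMap.le_opNorm _ _).trans ?_
      rw [dist_comm, dist_eq_norm]
      exact mul_le_mul_of_nonneg_right (hball _ (hseg t ht)).1.le (norm_nonneg _))
  simpa using h1

/-- The gradient of a Lipschitz function. -/
theorem abs_fderiv_comp_symm_le (hψ : IsIsometricImmersion ψ) {φ : M → ℝ} {L : ℝ≥0}
    (hφ : LipschitzWith L φ) (he : IsGraphChart P ψ e) {y : EuclideanSpace ℝ (Fin m)}
    (hy : y ∈ e.target) (hd : DifferentiableAt ℝ (fun y => φ (e.symm y)) y)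
    (v : EuclideanSpace ℝ (Fin m)) :
    |fderiv ℝ (fun y => φ (e.symm y)) y v|
      ≤ L * ‖fderiv ℝ (fun y => ψ (e.symm y)) y v‖ := by
  have hF : ContDiffAt ℝ ∞ (fun y => ψ (e.symm y)) y :=
    (he.contDiffOn_comp_symm hψ.contMDiff).contDiffAt (e.open_target.mem_nhds hy)
  have hcont : ContinuousAt (fun z => fderiv ℝ (fun y => ψ (e.symm y)) z v) y :=
    (hF.fderiv_right (m := ∞) (by simp)).continuousAt.clm_apply continuousAt_const
  refine le_of_forall_pos_le_add fun ε hε => ?_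
  obtain ⟨δ, hδ, hδε⟩ : ∃ δ : ℝ, 0 < δ ∧ L * δ ≤ ε := by
    refine ⟨ε / (L + 1), by positivity, ?_⟩
    rw [mul_div_assoc', div_le_iff₀ (by positivity)]
    nlinarith [L.coe_nonneg]
  have hev : ∀ᶠ z in 𝓝 y, ‖fderiv ℝ (fun y => ψ (e.symm y)) z v‖
      < ‖fderiv ℝ (fun y => ψ (e.symm y)) y v‖ + δ ∧ z ∈ e.target :=
    (hcont.norm.eventually_lt_const (by linarith)).and (e.open_target.mem_nhds hy)
  obtain ⟨r, hr, hball⟩ := Metric.eventually_nhds_iff_ball.1 hev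
  have hlim : Tendsto (fun t : ℝ => t⁻¹ • (φ (e.symm (y + t • v)) - φ (e.symm y))) (𝓝[>] 0)
      (𝓝 (fderiv ℝ (fun y => φ (e.symm y)) y v)) :=
    (hd.hasFDerivAt.hasLineDerivAt v).tendsto_slope_zero_right
  have hsmall : ∀ᶠ t : ℝ in 𝓝[>] 0, y + t • v ∈ ball y r := by
    have hc : ContinuousAt (fun t : ℝ => y + t • v) 0 := by fun_prop
    have : ball y r ∈ 𝓝 (y + (0 : ℝ) • v) := by simpa using ball_mem_nhds y hr
    exact (hc.eventually_mem this).filter_mono nhdsWithin_le_nhds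
  refine le_of_tendsto hlim.abs ?_
  filter_upwards [hsmall, self_mem_nhdsWithin] with t ht ht0
  have ht0' : (0 : ℝ) < t := ht0
  have hseg : ∀ s ∈ Icc (0 : ℝ) 1, y + s • (t • v) ∈ ball y r := by
    intro s hs
    have := (convex_ball y r).add_smul_sub_mem (mem_ball_self hr) ht hs
    simpa using this
  have h1 := dist_symm_le he hψ (y := y) (v := t • v)
    (C := t * (‖fderiv ℝ (fun y => ψ (e.symm y)) y v‖ + δ))
    (fun s hs => (hball _ (hseg s hs)).2) (fun s hs => by
      rw [map_smul, norm_smul, Real.norm_of_nonneg ht0'.le]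
      exact mul_le_mul_of_nonneg_left (hball _ (hseg s hs)).1.le ht0'.le)
  have h2 := hφ.dist_le_mul (e.symm (y + t • v)) (e.symm y)
  rw [dist_comm (e.symm (y + t • v)), Real.dist_eq] at h2
  rw [smul_eq_mul, abs_mul, abs_inv, abs_of_pos ht0', inv_mul_le_iff₀ ht0']
  calc _ ≤ L * (t * (‖fderiv ℝ (fun y => ψ (e.symm y)) y v‖ + δ)) :=
        h2.trans (mul_le_mul_of_nonneg_left h1 L.coe_nonneg)
    _ = t * (L * ‖fderiv ℝ (fun y => ψ (e.symm y)) y v‖ + L * δ) := by ring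
    _ ≤ _ := mul_le_mul_of_nonneg_left (by linarith) ht0'.le

end Gradient

section Caccioppoli

variable {m : ℕ} {M : Type*} [MetricSpace M] [ChartedSpace (EuclideanSpace ℝ (Fin m)) M]
  [RiemannianBundle (fun x : M => TangentSpace (𝓡 m) x)] [IsRiemannianManifold (𝓡 m) M]
  [IsManifold (𝓡 m) ∞ M]
  {b : EuclideanSpace ℝ (Fin (m + 1))}
  {P : EuclideanSpace ℝ (Fin (m + 1)) →L[ℝ] EuclideanSpace ℝ (Fin m)}
  {ψ ν : M → EuclideanSpace ℝ (Fin (m + 1))}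

/-- Testing with `φ² (1 - u)`, pointwise. -/
theorem chartDeriv_sq_mul_gradFieldOn_le (hP : IsHorizontalProj b P)
    (hψ : IsIsometricImmersion ψ) (hν : IsGaussMap ψ ν) (hu : ∀ x, 0 < ⟪b, ν x⟫) {φ : M → ℝ}
    {L : ℝ≥0} (hφ : LipschitzWith L φ) (hφ0 : ∀ x, 0 ≤ φ x) {B : Set M}
    (hB : ∀ x, x ∉ B → φ x = 0) {x : M}
    (hd : ∀ e : OpenPartialHomeomorph M (EuclideanSpace ℝ (Fin m)),
      IsGraphChart P ψ e → x ∈ e.source →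
        DifferentiableAt ℝ (fun y => φ (e.symm y)) (P (ψ x))) :
    chartDeriv P ψ (fun x => φ x * φ x * (1 - ⟪b, ν x⟫)) x (gradFieldOn P ψ ν x)
      ≤ B.indicator (fun x => L ^ 2 * ((1 - ⟪b, ν x⟫) ^ 2 / ⟪b, ν x⟫)) x := by
  obtain ⟨e, he, hx⟩ := exists_isGraphChart hP hψ hν hu x
  have hy := he.proj_mem_target hx
  have hgp := he.isGraphParam hψ.contMDiff hν hu
  have hdφ := (hd e he hx).hasFDerivAt
  have hdu : HasFDerivAt (fun y => 1 - ⟪b, ν (e.symm y)⟫)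
      (-(innerSL ℝ b).comp (fderiv ℝ (fun y => ν (e.symm y)) (P (ψ x)))) (P (ψ x)) :=
    ((innerSL ℝ b).hasFDerivAt.comp _ (hgp.differentiableAt_normal hy).hasFDerivAt).const_sub 1
  have hder := ((hdφ.mul hdφ).mul hdu).fderiv
  rw [chartDeriv_eq he hx, gradFieldOn_eq he hx]
  set Y := gradField P (fun y => ν (e.symm y)) (P (ψ x)) with hY
  have h1 : fderiv ℝ (fun y => φ (e.symm y) * φ (e.symm y) * (1 - ⟪b, ν (e.symm y)⟫)) (P (ψ x)) Y
      = -(φ x ^ 2 * (⟪b, ν x⟫ * ‖fderiv ℝ (fun y => ψ (e.symm y)) (P (ψ x)) Y‖ ^ 2))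
        + 2 * φ x * (1 - ⟪b, ν x⟫) * fderiv ℝ (fun y => φ (e.symm y)) (P (ψ x)) Y := by
    have h2 := DFunLike.congr_fun hder Y
    have h3 := hgp.inner_fderiv_normal_gradField hP hy
    simp only [he.symm_proj hx] at h3
    refine h2.trans ?_
    simp only [he.symm_proj hx, Pi.mul_apply, add_apply, smul_apply, neg_apply,
      ContinuousLinearMap.comp_apply, innerSL_apply_apply, smul_eq_mul]
    rw [← hY] at h3
    rw [h3]
    ring
  rw [h1]
  by_cases hxB : x ∈ B
  · rw [indicator_of_mem hxB]
    have h4 := abs_fderiv_comp_symm_le hψ hφ he hy (hd e he hx) Y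
    set G := ‖fderiv ℝ (fun y => ψ (e.symm y)) (P (ψ x)) Y‖ with hG
    set D := fderiv ℝ (fun y => φ (e.symm y)) (P (ψ x)) Y with hD
    set u := ⟪b, ν x⟫ with hudef
    have hu0 : 0 < u := hu x
    have h6 : 2 * φ x * (1 - u) * D ≤ φ x ^ 2 * (u * G ^ 2) + L ^ 2 * ((1 - u) ^ 2 / u) := by
      have h7 : |(1 - u) * D| ≤ |1 - u| * (L * G) := by
        rw [abs_mul]; exact mul_le_mul_of_nonneg_left h4 (abs_nonneg _)
      have h8 : 2 * φ x * (1 - u) * D ≤ 2 * (φ x * G * (L * |1 - u|)) := by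
        have := (le_abs_self _).trans h7
        nlinarith [hφ0 x]
      have h9 : L ^ 2 * ((1 - u) ^ 2 / u) = (L * |1 - u|) ^ 2 / u := by
        rw [mul_pow, sq_abs]; ring
      have h10 : 2 * (φ x * G * (L * |1 - u|))
          ≤ φ x ^ 2 * (u * G ^ 2) + (L * |1 - u|) ^ 2 / u := by
        have h11 : 0 ≤ (φ x * G * u - L * |1 - u|) ^ 2 / u := by positivity
        have h12 : (φ x * G * u - L * |1 - u|) ^ 2 / u
            = φ x ^ 2 * (u * G ^ 2) + (L * |1 - u|) ^ 2 / u
              - 2 * (φ x * G * (L * |1 - u|)) := by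
          field_simp
          ring
        linarith
      linarith
    linarith
  · rw [indicator_of_notMem hxB, hB x hxB]
    simp

variable [MeasurableSpace M] [BorelSpace M] [ProperSpace M] [SecondCountableTopology M]

/-- The integral `∫_{B_R} (1 - u)² e^{c|ψ|²/2} dvol` grows geometrically. -/
theorem integral_ball_growth (hP : IsHorizontalProj b P)
    (hψ : IsIsometricImmersion ψ) (hν : IsGaussMap ψ ν) (hu : ∀ x, 0 < ⟪b, ν x⟫) {c : ℝ}
    (hsol : IsSoliton ψ ν c) (hv : ∀ x, 1 / (1 + normA ψ ν x ^ 2) ≤ ⟪b, ν x⟫) (o : M) (R : ℝ) :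
    4 * ∫ x in ball o R, (1 - ⟪b, ν x⟫) ^ 2 / ⟪b, ν x⟫ * Real.exp (c * (‖ψ x‖ ^ 2 / 2))
        ∂(graphMeasure m b ν)
      ≤ ∫ x in ball o (R + 2), (1 - ⟪b, ν x⟫) ^ 2 / ⟪b, ν x⟫ *
        Real.exp (c * (‖ψ x‖ ^ 2 / 2)) ∂(graphMeasure m b ν) := by
  have := isLocallyFiniteMeasure_graphMeasure hP hψ hν hu
  set ρ := graphMeasure m b ν with hρ
  have hucont : Continuous fun x => ⟪b, ν x⟫ := continuous_const.inner hν.contMDiff.continuous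
  have hu1 : ∀ x, ⟪b, ν x⟫ ≤ 1 := by
    intro x
    have := real_inner_le_norm b (ν x)
    rwa [hP.norm_eq_one, hν.norm_eq_one, one_mul] at this
  have hwcont : Continuous fun x => Real.exp (c * (‖ψ x‖ ^ 2 / 2)) := by
    have := hψ.contMDiff.continuous
    fun_prop
  have hQcont : Continuous fun x => (1 - ⟪b, ν x⟫) ^ 2 / ⟪b, ν x⟫ *
      Real.exp (c * (‖ψ x‖ ^ 2 / 2)) :=
    (((continuous_const.sub hucont).pow 2).div hucont fun x => (hu x).ne').mul hwcont
  set Q : M → ℝ := fun x => (1 - ⟪b, ν x⟫) ^ 2 / ⟪b, ν x⟫ * Real.exp (c * (‖ψ x‖ ^ 2 / 2)) with hQ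
  have hQint : ∀ r, IntegrableOn Q (ball o r) ρ := fun r =>
    (hQcont.continuousOn.integrableOn_compact (isCompact_closedBall o r)).mono_set
      ball_subset_closedBall
  -- the cutoff
  set φ : M → ℝ := fun x => max 0 (min 1 ((R + 2 - dist x o) * (1 / 2))) with hφdef
  have hφ : LipschitzWith (1 / 2) φ := by
    have h1 : LipschitzWith (1 / 2) fun x : M => (R + 2 - dist x o) * (1 / 2) := by
      refine LipschitzWith.of_dist_le_mul fun x y => ?_
      have := abs_dist_sub_le x y o
      rw [Real.dist_eq, ← sub_mul, abs_mul, abs_of_pos (by norm_num : (0 : ℝ) < 1 / 2), mul_comm]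
      push_cast
      refine mul_le_mul_of_nonneg_left ?_ (by norm_num)
      rw [show R + 2 - dist x o - (R + 2 - dist y o) = -(dist x o - dist y o) by ring, abs_neg]
      exact this
    exact (h1.const_min 1).const_max 0
  have hφ0 : ∀ x, 0 ≤ φ x := fun x => le_max_left _ _
  have hφB : ∀ x, x ∉ ball o (R + 2) → φ x = 0 := by
    intro x hx
    rw [mem_ball, not_lt] at hx
    refine max_eq_left ((min_le_right _ _).trans ?_)
    linarith
  have hφ1 : ∀ x ∈ ball o R, φ x = 1 := by
    intro x hx
    rw [mem_ball] at hx
    simp only [hφdef]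
    rw [min_eq_left (by linarith), max_eq_right zero_le_one]
  have hφc : HasCompactSupport φ := HasCompactSupport.intro (isCompact_closedBall o (R + 2))
    fun x hx => hφB x fun h => hx (ball_subset_closedBall h)
  have hφLip : IsChartLipschitz P ψ φ := isChartLipschitz_of_lipschitzWith hψ hφ
  have hfsm : ContMDiff (𝓡 m) 𝓘(ℝ, ℝ) ∞ fun x => 1 - ⟪b, ν x⟫ := by
    have h1 : ContDiff ℝ ∞ fun z : EuclideanSpace ℝ (Fin (m + 1)) => 1 - ⟪b, z⟫ :=
      contDiff_const.sub (contDiff_const.inner ℝ contDiff_id)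
    exact h1.contMDiff.comp hν.contMDiff
  have hζ : IsChartLipschitz P ψ (fun x => φ x * φ x * (1 - ⟪b, ν x⟫)) :=
    (hφLip.mul hφLip).mul (isChartLipschitz_of_contMDiff hfsm)
  have hζc : HasCompactSupport (fun x => φ x * φ x * (1 - ⟪b, ν x⟫)) :=
    (hφc.mul_left).mul_right
  obtain ⟨i1, i2, heq⟩ := weak_equation hP hψ hν hu hsol hζ hζc
  have hupper : ∫ x, chartDeriv P ψ (fun x => φ x * φ x * (1 - ⟪b, ν x⟫)) x
      (gradFieldOn P ψ ν x) * Real.exp (c * (‖ψ x‖ ^ 2 / 2)) ∂ρ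
      ≤ ∫ x in ball o (R + 2), (1 / 4) * Q x ∂ρ := by
    rw [← integral_indicator measurableSet_ball]
    refine integral_mono_ae i1 (IntegrableOn.integrable_indicator
      ((hQint (R + 2)).const_mul _) measurableSet_ball) ?_
    filter_upwards [ae_differentiableAt_of_isChartLipschitz hP hψ hν hu hφLip] with x hx
    have h1 := mul_le_mul_of_nonneg_right (chartDeriv_sq_mul_gradFieldOn_le hP hψ hν hu hφ hφ0
      hφB hx) (Real.exp_pos (c * (‖ψ x‖ ^ 2 / 2))).le
    refine h1.trans (le_of_eq ?_)
    by_cases hxB : x ∈ ball o (R + 2)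
    · rw [indicator_of_mem hxB, indicator_of_mem hxB, hQ]
      push_cast
      ring
    · rw [indicator_of_notMem hxB, indicator_of_notMem hxB, zero_mul]
  have hlower : ∫ x in ball o R, Q x ∂ρ ≤ ∫ x, φ x * φ x * (1 - ⟪b, ν x⟫) *
      (Real.exp (c * (‖ψ x‖ ^ 2 / 2)) * normA ψ ν x ^ 2) ∂ρ := by
    rw [← integral_indicator measurableSet_ball]
    refine integral_mono ((hQint R).integrable_indicator measurableSet_ball) i2 fun x => ?_
    have hu0 := hu x
    have hf0 : 0 ≤ 1 - ⟪b, ν x⟫ := by linarith [hu1 x]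
    have hw0 := Real.exp_pos (c * (‖ψ x‖ ^ 2 / 2))
    by_cases hxB : x ∈ ball o R
    · rw [indicator_of_mem hxB, hφ1 x hxB]
      have hA : (1 - ⟪b, ν x⟫) / ⟪b, ν x⟫ ≤ normA ψ ν x ^ 2 := by
        have h1 := hv x
        rw [div_le_iff₀ (by positivity)] at h1
        rw [div_le_iff₀ hu0]
        linarith
      have h2 : Q x = (1 - ⟪b, ν x⟫) * Real.exp (c * (‖ψ x‖ ^ 2 / 2)) *
          ((1 - ⟪b, ν x⟫) / ⟪b, ν x⟫) := by
        rw [hQ]; ring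
      rw [h2]
      calc _ ≤ (1 - ⟪b, ν x⟫) * Real.exp (c * (‖ψ x‖ ^ 2 / 2)) * normA ψ ν x ^ 2 :=
            mul_le_mul_of_nonneg_left hA (by positivity)
        _ = _ := by ring
    · rw [indicator_of_notMem hxB]
      have := hφ0 x
      positivity
  rw [integral_const_mul] at hupper
  linarith [hlower.trans (heq.symm.le.trans hupper)]

/-- A soliton of zero weighted growth with `⟨b, ν⟩ ≥ 1 / (1 + |A|²)` has constant normal `b`. -/
theorem gaussMap_eq_const (hP : IsHorizontalProj b P)
    (hψ : IsIsometricImmersion ψ) (hν : IsGaussMap ψ ν) (hu : ∀ x, 0 < ⟪b, ν x⟫) {c : ℝ}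
    (hsol : IsSoliton ψ ν c) (hv : ∀ x, 1 / (1 + normA ψ ν x ^ 2) ≤ ⟪b, ν x⟫) (o : M)
    (hgrowth : weightedGrowth m (fun x => Real.exp (c * (‖ψ x‖ ^ 2 / 2))) o = 0) (x : M) :
    ν x = b := by
  have := isLocallyFiniteMeasure_graphMeasure hP hψ hν hu
  have hpos := isOpenPosMeasure_graphMeasure hP hψ hν hu
  have hucont : Continuous fun x => ⟪b, ν x⟫ := continuous_const.inner hν.contMDiff.continuous
  have hu1 : ∀ x, ⟪b, ν x⟫ ≤ 1 := by
    intro x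
    have := real_inner_le_norm b (ν x)
    rwa [hP.norm_eq_one, hν.norm_eq_one, one_mul] at this
  have hwcont : Continuous fun x => Real.exp (c * (‖ψ x‖ ^ 2 / 2)) := by
    have := hψ.contMDiff.continuous
    fun_prop
  set Q : M → ℝ := fun x => (1 - ⟪b, ν x⟫) ^ 2 / ⟪b, ν x⟫ * Real.exp (c * (‖ψ x‖ ^ 2 / 2)) with hQ
  have hQcont : Continuous Q :=
    (((continuous_const.sub hucont).pow 2).div hucont fun x => (hu x).ne').mul hwcont
  have hQ0 : ∀ x, 0 ≤ Q x := by
    intro x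
    have := hu x
    simp only [hQ]
    positivity
  have hQint : ∀ r, IntegrableOn Q (ball o r) (graphMeasure m b ν) := fun r =>
    (hQcont.continuousOn.integrableOn_compact (isCompact_closedBall o r)).mono_set
      ball_subset_closedBall
  have hle : ∀ R, ENNReal.ofReal (∫ x in ball o R, Q x ∂(graphMeasure m b ν))
      ≤ ∫⁻ x in ball o R, ENNReal.ofReal (Real.exp (c * (‖ψ x‖ ^ 2 / 2)))
        ∂(riemannianVolume m M) := by
    intro R
    rw [ofReal_integral_eq_lintegral_ofReal (hQint R) (Eventually.of_forall hQ0), graphMeasure,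
      restrict_withDensity measurableSet_ball,
      lintegral_withDensity_eq_lintegral_mul _ hucont.measurable.ennreal_ofReal
        hQcont.measurable.ennreal_ofReal]
    refine lintegral_mono fun x => ?_
    rw [Pi.mul_apply, ← ENNReal.ofReal_mul (hu x).le]
    refine ENNReal.ofReal_le_ofReal ?_
    have h1 : ⟪b, ν x⟫ * Q x = (1 - ⟪b, ν x⟫) ^ 2 * Real.exp (c * (‖ψ x‖ ^ 2 / 2)) := by
      have := (hu x).ne'
      simp only [hQ]
      field_simp
    rw [h1]
    refine mul_le_of_le_one_left (Real.exp_pos _).le ?_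
    have := hu x
    have := hu1 x
    exact pow_le_one₀ (by linarith) (by linarith)
  have hzero := eq_zero_of_growth
    (J := fun R => ∫ x in ball o R, Q x ∂(graphMeasure m b ν))
    (fun r s hrs => setIntegral_mono_set (hQint s) (Eventually.of_forall hQ0)
      (ball_subset_ball hrs).eventuallyLE)
    (fun R => integral_nonneg hQ0)
    (fun R => integral_ball_growth hP hψ hν hu hsol hv o R) hle hgrowth
  have hQx : Q x = 0 := by
    by_contra hne
    have hQxpos : 0 < Q x := lt_of_le_of_ne (hQ0 x) (Ne.symm hne)
    have hopen : IsOpen (Function.support Q ∩ ball o (dist x o + 1)) :=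
      hQcont.isOpen_support.inter isOpen_ball
    have h1 : 0 < ∫ x in ball o (dist x o + 1), Q x ∂(graphMeasure m b ν) := by
      rw [setIntegral_pos_iff_support_of_nonneg_ae (Eventually.of_forall hQ0) (hQint _)]
      exact hopen.measure_pos _ ⟨x, hne, by simp⟩
    exact h1.ne' (hzero _)
  have h2 : ⟪b, ν x⟫ = 1 := by
    have h3 : (1 - ⟪b, ν x⟫) ^ 2 / ⟪b, ν x⟫ = 0 :=
      (mul_eq_zero.1 hQx).resolve_right (Real.exp_pos _).ne'
    have h4 : (1 - ⟪b, ν x⟫) ^ 2 = 0 := (div_eq_zero_iff.1 h3).resolve_right (hu x).ne'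
    have h5 := pow_eq_zero_iff (two_ne_zero) |>.1 h4
    linarith
  exact ((inner_eq_one_iff_of_norm_eq_one (𝕜 := ℝ) hP.norm_eq_one (hν.norm_eq_one x)).1 h2).symm

end Caccioppoli

section Hyperplane

variable {m : ℕ} {M : Type*} [MetricSpace M] [ChartedSpace (EuclideanSpace ℝ (Fin m)) M]
  [RiemannianBundle (fun x : M => TangentSpace (𝓡 m) x)]
  {b : EuclideanSpace ℝ (Fin (m + 1))}
  {P : EuclideanSpace ℝ (Fin (m + 1)) →L[ℝ] EuclideanSpace ℝ (Fin m)}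
  {ψ ν : M → EuclideanSpace ℝ (Fin (m + 1))}

theorem inner_fderiv_comp_symm_eq_zero (hψ : IsIsometricImmersion ψ) (hν : IsGaussMap ψ ν)
    (hb : ∀ x, ν x = b) {e : OpenPartialHomeomorph M (EuclideanSpace ℝ (Fin m))}
    (he : IsGraphChart P ψ e) {y : EuclideanSpace ℝ (Fin m)} (hy : y ∈ e.target)
    (v : EuclideanSpace ℝ (Fin m)) : ⟪b, fderiv ℝ (fun y => ψ (e.symm y)) y v⟫ = 0 := by
  rw [real_inner_comm, he.fderiv_comp_symm hψ.contMDiff hy, ← hb (e.symm y)]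
  exact hν.normal _ _

variable [IsManifold (𝓡 m) ∞ M]

/-- A hypersurface with constant normal lies in a hyperplane. -/
theorem exists_inner_eq_const [PreconnectedSpace M] [Nonempty M] (hP : IsHorizontalProj b P)
    (hψ : IsIsometricImmersion ψ) (hν : IsGaussMap ψ ν) (hb : ∀ x, ν x = b) :
    ∃ a : ℝ, ∀ x, ⟪b, ψ x⟫ = a := by
  have hu : ∀ x, 0 < ⟪b, ν x⟫ := fun x => by
    rw [hb, real_inner_self_eq_norm_sq, hP.norm_eq_one]; norm_num
  have hloc : IsLocallyConstant fun x => ⟪b, ψ x⟫ := by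
    rw [IsLocallyConstant.iff_exists_open]
    intro x
    obtain ⟨e, he, hx⟩ := exists_isGraphChart hP hψ hν hu x
    obtain ⟨r, hr, hball⟩ := Metric.isOpen_iff.1 e.open_target _ (he.proj_mem_target hx)
    have hΦ : Continuous (fun x => P (ψ x)) := P.continuous.comp hψ.contMDiff.continuous
    refine ⟨(fun x => P (ψ x)) ⁻¹' ball (P (ψ x)) r ∩ e.source,
      (isOpen_ball.preimage hΦ).inter e.open_source, ⟨mem_ball_self hr, hx⟩, fun z hz => ?_⟩
    have hgp := he.isGraphParam hψ.contMDiff hν hu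
    have hd : ∀ y ∈ ball (P (ψ x)) r, HasFDerivAt (fun y => ⟪b, ψ (e.symm y)⟫)
        (0 : EuclideanSpace ℝ (Fin m) →L[ℝ] ℝ) y := by
      intro y hy
      refine ((innerSL ℝ b).hasFDerivAt.comp y
        (hgp.differentiableAt (hball hy)).hasFDerivAt).congr_fderiv ?_
      ext1 v
      exact inner_fderiv_comp_symm_eq_zero hψ hν hb he (hball hy) v
    have h1 := (convex_ball (P (ψ x)) r).is_const_of_fderivWithin_eq_zero (𝕜 := ℝ)
      (fun y hy => (hd y hy).differentiableAt.differentiableWithinAt)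
      (fun y hy => by
        rw [fderivWithin_of_isOpen isOpen_ball hy, (hd y hy).fderiv]) hz.1 (mem_ball_self hr)
    simpa [he.symm_proj hz.2, he.symm_proj hx] using h1
  obtain ⟨x₀⟩ := ‹Nonempty M›
  exact ⟨⟪b, ψ x₀⟫, fun x => hloc.apply_eq_of_preconnectedSpace x x₀⟩

/-- The projection of a proper hypersurface with constant normal is onto. -/
theorem surjective_proj [IsRiemannianManifold (𝓡 m) M] [ProperSpace M] [Nonempty M] (hP : IsHorizontalProj b P)
    (hψ : IsIsometricImmersion ψ) (hν : IsGaussMap ψ ν) (hb : ∀ x, ν x = b)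
    (z : EuclideanSpace ℝ (Fin m)) : ∃ x, P (ψ x) = z := by
  have hu : ∀ x, 0 < ⟪b, ν x⟫ := fun x => by
    rw [hb, real_inner_self_eq_norm_sq, hP.norm_eq_one]; norm_num
  obtain ⟨o⟩ := ‹Nonempty M›
  have hΦ : Continuous (fun x => P (ψ x)) := P.continuous.comp hψ.contMDiff.continuous
  have hcont : Continuous fun x => dist (P (ψ x)) z + dist x o / 2 :=
    (hΦ.dist continuous_const).add ((continuous_id.dist continuous_const).div_const 2)
  have hlim : Tendsto (fun x => dist (P (ψ x)) z + dist x o / 2) (cocompact M) atTop := by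
    refine tendsto_atTop_mono (fun x => le_add_of_nonneg_left dist_nonneg) ?_
    exact (tendsto_dist_right_cocompact_atTop o).atTop_div_const two_pos
  obtain ⟨x, hx⟩ := hcont.exists_forall_le hlim
  refine ⟨x, ?_⟩
  by_contra hne
  have hpos : 0 < dist (P (ψ x)) z := dist_pos.2 hne
  obtain ⟨e, he, hxe⟩ := exists_isGraphChart hP hψ hν hu x
  have hgp := he.isGraphParam hψ.contMDiff hν hu
  obtain ⟨r, hr, hball⟩ := Metric.isOpen_iff.1 e.open_target _ (he.proj_mem_target hxe)
  obtain ⟨t, ht0, ht1, htr⟩ : ∃ t : ℝ, 0 < t ∧ t ≤ 1 ∧ t * dist (P (ψ x)) z < r := by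
    refine ⟨min 1 (r / (2 * dist (P (ψ x)) z)), by positivity, min_le_left _ _, ?_⟩
    calc _ ≤ r / (2 * dist (P (ψ x)) z) * dist (P (ψ x)) z :=
          mul_le_mul_of_nonneg_right (min_le_right _ _) hpos.le
      _ = r / 2 := by field_simp
      _ < r := by linarith
  set v := t • (z - P (ψ x)) with hvdef
  have hvn : ‖v‖ = t * dist (P (ψ x)) z := by
    rw [hvdef, norm_smul, Real.norm_of_nonneg ht0.le, dist_comm, dist_eq_norm]
  have hseg : ∀ s ∈ Icc (0 : ℝ) 1, P (ψ x) + s • v ∈ e.target := by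
    intro s hs
    apply hball
    rw [mem_ball, dist_eq_norm, add_sub_cancel_left, norm_smul, Real.norm_of_nonneg hs.1]
    calc s * ‖v‖ ≤ 1 * ‖v‖ := mul_le_mul_of_nonneg_right hs.2 (norm_nonneg _)
      _ < r := by rw [one_mul, hvn]; exact htr
  have hdist := dist_symm_le he hψ hseg (C := ‖v‖) (fun s hs => by
    refine le_of_eq ?_
    have h1 := hP.norm_sq_eq (fderiv ℝ (fun y => ψ (e.symm y)) (P (ψ x) + s • v) v)
    rw [hgp.proj_fderiv (hseg s hs), inner_fderiv_comp_symm_eq_zero hψ hν hb he (hseg s hs)] at h1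
    refine (sq_eq_sq₀ (norm_nonneg _) (norm_nonneg _)).1 ?_
    linarith)
  rw [he.symm_proj hxe] at hdist
  have hmem : P (ψ x) + v ∈ e.target := by simpa using hseg 1 (by simp)
  have h2 := hx (e.symm (P (ψ x) + v))
  rw [he.proj_symm hmem] at h2
  have h3 : dist (P (ψ x) + v) z = (1 - t) * dist (P (ψ x)) z := by
    rw [dist_eq_norm, dist_eq_norm, hvdef,
      show P (ψ x) + t • (z - P (ψ x)) - z = (1 - t) • (P (ψ x) - z) by module, norm_smul,
      Real.norm_of_nonneg (by linarith)]
  have h4 := dist_triangle (e.symm (P (ψ x) + v)) x o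
  rw [dist_comm _ x] at h4
  rw [h3] at h2
  have h5 : 0 < t * dist (P (ψ x)) z := mul_pos ht0 hpos
  linarith

end Hyperplane

end MCFSoliton

end

theorem stmt12 {m : ℕ} {M : Type*} [MetricSpace M] [ConnectedSpace M] [CompleteSpace M]
    [NoncompactSpace M] [SecondCountableTopology M] [MeasurableSpace M] [BorelSpace M]
    [ChartedSpace (EuclideanSpace ℝ (Fin m)) M] [IsManifold (𝓡 m) ∞ M]
    [RiemannianBundle (fun x : M => TangentSpace (𝓡 m) x)]
    [IsContMDiffRiemannianBundle (𝓡 m) ∞ (EuclideanSpace ℝ (Fin m))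
      (fun x : M => TangentSpace (𝓡 m) x)]
    [IsRiemannianManifold (𝓡 m) M]
    (ψ ν : M → EuclideanSpace ℝ (Fin (m + 1)))
    (hψ : MCFSoliton.IsIsometricImmersion ψ) (hν : MCFSoliton.IsGaussMap ψ ν)
    (c : ℝ) (hsol : MCFSoliton.IsSoliton ψ ν c)
    (o : M)
    (hgrowth : MCFSoliton.weightedGrowth m (fun x => Real.exp (c * (‖ψ x‖ ^ 2 / 2))) o = 0)
    (hA : ∃ C : ℝ, ∀ x, MCFSoliton.normA ψ ν x ≤ C)
    (b : EuclideanSpace ℝ (Fin (m + 1))) (hb : ‖b‖ = 1)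
    (hv : ∀ x, 1 / (1 + MCFSoliton.normA ψ ν x ^ 2) ≤ ⟪b, ν x⟫) :
    (∃ a : ℝ, range ψ = {y | ⟪b, y⟫ = a}) ∧ (c ≠ 0 → 0 ∈ range ψ) := by

  have hu : ∀ x, 0 < ⟪b, ν x⟫ := fun x =>
    lt_of_lt_of_le (by positivity) (hv x)
  have hproper : ProperSpace M := MCFSoliton.properSpace_of_isRiemannianManifold m M
  obtain ⟨P, hP⟩ := MCFSoliton.exists_isHorizontalProj hb
  have hνb : ∀ x, ν x = b := MCFSoliton.gaussMap_eq_const hP hψ hν hu hsol hv o hgrowth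
  have hne : Nonempty M := ⟨o⟩
  obtain ⟨a, ha⟩ := MCFSoliton.exists_inner_eq_const hP hψ hν hνb
  have hrange : range ψ = {y | ⟪b, y⟫ = a} := by
    ext y
    refine ⟨?_, fun hy => ?_⟩
    · rintro ⟨x, rfl⟩
      exact ha x
    · obtain ⟨x, hx⟩ := MCFSoliton.surjective_proj hP hψ hν hνb (P y)
      refine ⟨x, sub_eq_zero.1 (hP.eq_zero ?_ ?_)⟩
      · rw [map_sub, hx, sub_self]
      · rw [inner_sub_right, ha x, show ⟪b, y⟫ = a from hy, sub_self]
  refine ⟨⟨a, hrange⟩, fun hc => ?_⟩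
  obtain ⟨e, he, ho⟩ := MCFSoliton.exists_isGraphChart hP hψ hν hu o
  have htr := MCFSoliton.trace_proj_fderiv_normal_eq hP hψ hν hu he hsol (he.proj_mem_target ho)
  have hconst : (fun y => ν (e.symm y)) = fun _ => b := funext fun y => hνb _
  rw [hconst, he.symm_proj ho, hνb, real_inner_comm, ha o] at htr
  have ha0 : a = 0 := by
    have h1 : c * a = 0 := by simpa using htr
    exact (mul_eq_zero.1 h1).resolve_left hc
  rw [hrange, ha0]
  simp
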